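/- Let H be a Berge-K4-saturated 3-uniform hypergraph on n ≥ 7 vertices with the minimum number of hyperedges. Then the minimum degree of H is at least 2. -/

import Mathlib

variable {V : Type*} [DecidableEq V]

/-- A Berge-K4 in the hyperedge set `E` with core vertices `a,b,c,d`:
four distinct vertices together with six distinct hyperedges, one assigned
to each pair of core vertices, each containing its assigned pair. -/
def IsBergeK4Core (E : Finset (Finset V)) (a b c d : V) : Prop :=
  a ≠ b ∧ a ≠ c ∧ a ≠ d ∧ b ≠ c ∧ b ≠ d ∧ c ≠ d ∧
  ∃ fab fac fad fbc fbd fcd : Finset V,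
    fab ∈ E ∧ fac ∈ E ∧ fad ∈ E ∧ fbc ∈ E ∧ fbd ∈ E ∧ fcd ∈ E ∧
    ([fab, fac, fad, fbc, fbd, fcd] : List (Finset V)).Nodup ∧
    a ∈ fab ∧ b ∈ fab ∧ a ∈ fac ∧ c ∈ fac ∧ a ∈ fad ∧ d ∈ fad ∧
    b ∈ fbc ∧ c ∈ fbc ∧ b ∈ fbd ∧ d ∈ fbd ∧ c ∈ fcd ∧ d ∈ fcd

/-- `E` contains a Berge-K4. -/
def IsBergeK4 (E : Finset (Finset V)) : Prop :=
  ∃ a b c d : V, IsBergeK4Core E a b c d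

/-- Every hyperedge has exactly 3 vertices. -/
def Is3Uniform (E : Finset (Finset V)) : Prop := ∀ e ∈ E, e.card = 3

/-- The degree of a vertex: the number of hyperedges containing it. -/
def hdeg (E : Finset (Finset V)) (v : V) : ℕ := (E.filter fun e => v ∈ e).card

/-- A 3-uniform Berge-K4-saturated hypergraph on the (finite) vertex type `V`:
it is 3-uniform, Berge-K4-free, and adding any non-hyperedge (3-element subset
of the vertices not already a hyperedge) creates a Berge-K4. -/
def IsSaturated [Fintype V] (E : Finset (Finset V)) : Prop :=
  Is3Uniform E ∧ ¬ IsBergeK4 E ∧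
    ∀ e : Finset V, e.card = 3 → e ∉ E → IsBergeK4 (insert e E)

/-- The pair `(u,v)` is good: there are two further vertices `x,y` (so that
`u,v,x,y` are four distinct vertices) and five distinct hyperedges, one for
each pair among `u,v,x,y` other than `uv`, each containing its assigned pair;
i.e. adding an edge on `{u,v}` completes a Berge-K4 with core `{u,v,x,y}`. -/
def GoodPair (E : Finset (Finset V)) (u v : V) : Prop :=
  ∃ x y : V, u ≠ v ∧ u ≠ x ∧ u ≠ y ∧ v ≠ x ∧ v ≠ y ∧ x ≠ y ∧
  ∃ eux euy evx evy exy : Finset V,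
    eux ∈ E ∧ euy ∈ E ∧ evx ∈ E ∧ evy ∈ E ∧ exy ∈ E ∧
    ([eux, euy, evx, evy, exy] : List (Finset V)).Nodup ∧
    u ∈ eux ∧ x ∈ eux ∧ u ∈ euy ∧ y ∈ euy ∧
    v ∈ evx ∧ x ∈ evx ∧ v ∈ evy ∧ y ∈ evy ∧
    x ∈ exy ∧ y ∈ exy

/-!
Suppose that a vertex `v` has degree at most one. A new hyperedge through `v` can only complete a
Berge-K4 by playing the role of a pair avoiding `v`, so every pair of other vertices is good or
spans a hyperedge with `v`. This forces degree at least three at all other vertices, and a vertex of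
degree three off the hyperedge through `v` lies on a tight pentagon: five vertices in cyclic order,
any three consecutive of which form a hyperedge. The hyperedges joining the pentagon to the
remaining vertices raise further degrees to four, and a degree count gives more than `n` hyperedges.
On the other hand, attaching pairs of new vertices to a small gadget yields saturated hypergraphs
with at most `n` hyperedges.
-/

variable {E : Finset (Finset V)} {a b c d u v w x y z : V} {e f p q r s t : Finset V}

/-- `a`, `b`, `c` are three distinct vertices spanning a hyperedge of `E`. -/
structure Tri (E : Finset (Finset V)) (a b c : V) : Prop where
  ne₁₂ : a ≠ b
  ne₁₃ : a ≠ c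
  ne₂₃ : b ≠ c
  mem : {a, b, c} ∈ E

/-- A Berge copy of `K₄` minus the edge `uw`: distinct vertices `u`, `w`, `x`, `y` and distinct
hyperedges `p`, `q`, `r`, `s`, `t` on the pairs `ux`, `uy`, `wx`, `wy`, `xy`, in this order. Its
existence is what makes `(u, w)` a good pair. -/
structure BergeDiamond (E : Finset (Finset V)) (u w x y : V) (p q r s t : Finset V) : Prop where
  ne : [u, w, x, y].Nodup
  mem : p ∈ E ∧ q ∈ E ∧ r ∈ E ∧ s ∈ E ∧ t ∈ E
  nodup : [p, q, r, s, t].Nodup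
  inc : (u ∈ p ∧ x ∈ p) ∧ (u ∈ q ∧ y ∈ q) ∧ (w ∈ r ∧ x ∈ r) ∧ (w ∈ s ∧ y ∈ s) ∧ x ∈ t ∧ y ∈ t

/-- `E` is a 3-uniform hypergraph without a Berge-K4. -/
structure IsK4Free (E : Finset (Finset V)) : Prop where
  uniform : Is3Uniform E
  free : ¬ IsBergeK4 E

namespace Tri

theorem left_swap (h : Tri E a b c) : Tri E b a c :=
  ⟨h.ne₁₂.symm, h.ne₂₃, h.ne₁₃, Finset.insert_comm a b {c} ▸ h.mem⟩

theorem right_swap (h : Tri E a b c) : Tri E a c b :=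
  ⟨h.ne₁₃, h.ne₁₂, h.ne₂₃.symm, Finset.pair_comm b c ▸ h.mem⟩

theorem rotate (h : Tri E a b c) : Tri E b c a := h.left_swap.right_swap

end Tri

section Degree

theorem length_le_hdeg {l : List (Finset V)} (hl : l.Nodup) (h : ∀ e ∈ l, e ∈ E ∧ v ∈ e) :
    l.length ≤ hdeg E v := by
  rw [← List.toFinset_card_of_nodup hl]
  exact Finset.card_le_card fun e he => Finset.mem_filter.2 (h e (List.mem_toFinset.1 he))

theorem mem_of_hdeg_le_length {l : List (Finset V)} (hl : l.Nodup)
    (h : ∀ e ∈ l, e ∈ E ∧ v ∈ e) (hdeg_le : hdeg E v ≤ l.length) (he : e ∈ E) (hv : v ∈ e) :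
    e ∈ l := by
  by_contra hel
  have := length_le_hdeg (List.nodup_cons.2 ⟨hel, hl⟩) (List.forall_mem_cons.2 ⟨⟨he, hv⟩, h⟩)
  rw [List.length_cons] at this
  omega

theorem sum_hdeg [Fintype V] (hE : Is3Uniform E) : ∑ u, hdeg E u = 3 * E.card := by
  have := Finset.sum_card_bipartiteAbove_eq_sum_card_bipartiteBelow (s := Finset.univ) (t := E)
    fun (u : V) e => u ∈ e
  simp only [Finset.bipartiteAbove, Finset.bipartiteBelow, Finset.filter_univ_mem] at this
  rw [mul_comm, ← Finset.sum_const_nat hE]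
  exact this

theorem exists_mem_notMem_of_hdeg_lt {l : List (Finset V)} (h : l.length < hdeg E v) :
    ∃ e ∈ E, v ∈ e ∧ e ∉ l := by
  obtain ⟨e, he, hel⟩ := Finset.exists_mem_notMem_of_card_lt_card
    ((List.toFinset_card_le l).trans_lt h)
  exact ⟨e, (Finset.mem_filter.1 he).1, (Finset.mem_filter.1 he).2, by simpa using hel⟩

end Degree

section Hyperedges

theorem Is3Uniform.exists_tri (hE : Is3Uniform E) (hf : f ∈ E) (ha : a ∈ f) (hb : b ∈ f)
    (hab : a ≠ b) : ∃ c, Tri E a b c ∧ f = {a, b, c} := by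
  have hcard : ((f.erase a).erase b).card = 1 := by
    rw [Finset.card_erase_of_mem (Finset.mem_erase.2 ⟨hab.symm, hb⟩),
      Finset.card_erase_of_mem ha, hE f hf]
  obtain ⟨c, hc⟩ := Finset.card_eq_one.1 hcard
  have hcf : c ∈ (f.erase a).erase b := hc ▸ Finset.mem_singleton_self c
  have hf_eq : f = {a, b, c} := by
    rw [← hc, Finset.insert_erase (Finset.mem_erase.2 ⟨hab.symm, hb⟩), Finset.insert_erase ha]
  simp only [Finset.mem_erase] at hcf
  exact ⟨c, ⟨hab, hcf.2.1.symm, hcf.1.symm, hf_eq ▸ hf⟩, hf_eq⟩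

theorem Is3Uniform.exists_tri_of_mem (hE : Is3Uniform E) (hf : f ∈ E) (ha : a ∈ f) :
    ∃ b c, Tri E a b c ∧ f = {a, b, c} := by
  obtain ⟨b, hb, hba⟩ := Finset.exists_mem_ne (by rw [hE f hf]; norm_num) a
  exact ⟨b, hE.exists_tri hf ha hb hba.symm⟩

end Hyperedges

section Diamond

omit [DecidableEq V]

namespace BergeDiamond

theorem symm_left (h : BergeDiamond E u w x y p q r s t) : BergeDiamond E w u x y r s p q t := by
  cases h; constructor <;> grind

theorem symm_right (h : BergeDiamond E u w x y p q r s t) : BergeDiamond E u w y x q p s r t := by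
  cases h; constructor <;> grind

/-- The hyperedge used for `ux` also contains `w`, so it can be used for `uw` instead. -/
theorem rotate (h : BergeDiamond E u w x y p q r s t) (hw : w ∈ p) :
    BergeDiamond E u x w y p q r t s := by
  cases h; constructor <;> grind

theorem goodPair (h : BergeDiamond E u w x y p q r s t) : GoodPair E u w := by
  obtain ⟨hne, hmem, hnodup, hinc⟩ := h
  refine ⟨x, y, ?_, ?_, ?_, ?_, ?_, ?_, p, q, r, s, t, ?_⟩ <;> grind

theorem isBergeK4 (h : BergeDiamond E u w x y p q r s t) (he : e ∈ E) (hu : u ∈ e) (hw : w ∈ e)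
    (hnew : e ∉ [p, q, r, s, t]) : IsBergeK4 E := by
  obtain ⟨hne, hmem, hnodup, hinc⟩ := h
  refine ⟨u, w, x, y, ?_, ?_, ?_, ?_, ?_, ?_, e, p, q, r, s, t, ?_⟩ <;> grind

theorem mono {E' : Finset (Finset V)} (h : BergeDiamond E u w x y p q r s t) (hE : E ⊆ E') :
    BergeDiamond E' u w x y p q r s t :=
  ⟨h.ne, ⟨hE h.mem.1, hE h.mem.2.1, hE h.mem.2.2.1, hE h.mem.2.2.2.1, hE h.mem.2.2.2.2⟩,
    h.nodup, h.inc⟩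

end BergeDiamond

namespace GoodPair

theorem exists_bergeDiamond (h : GoodPair E u w) :
    ∃ x y p q r s t, BergeDiamond E u w x y p q r s t := by
  obtain ⟨x, y, huw, hux, huy, hwx, hwy, hxy, p, q, r, s, t, hp, hq, hr, hs, ht, hnodup, hinc⟩ := h
  exact ⟨x, y, p, q, r, s, t, by grind, ⟨hp, hq, hr, hs, ht⟩, hnodup, by grind⟩

theorem symm (h : GoodPair E u w) : GoodPair E w u := by
  obtain ⟨x, y, p, q, r, s, t, hD⟩ := h.exists_bergeDiamond
  exact hD.symm_left.goodPair

theorem ne (h : GoodPair E u w) : u ≠ w := by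
  obtain ⟨x, y, huw, -⟩ := h
  exact huw

end GoodPair

end Diamond

theorem GoodPair.two_le_hdeg (h : GoodPair E u w) : 2 ≤ hdeg E u := by
  obtain ⟨x, y, p, q, r, s, t, -, hmem, hnodup, hinc⟩ := h.exists_bergeDiamond
  exact length_le_hdeg (l := [p, q]) (by grind) (by grind)

theorem GoodPair.isBergeK4_insert (h : GoodPair E u w) (he : e ∉ E) (hu : u ∈ e) (hw : w ∈ e) :
    IsBergeK4 (insert e E) := by
  obtain ⟨x, y, p, q, r, s, t, hD⟩ := h.exists_bergeDiamond
  have := hD.mem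
  exact (hD.mono (Finset.subset_insert e E)).isBergeK4 (Finset.mem_insert_self e E) hu hw
    (by grind)

theorem exists_goodPair_of_isBergeK4_insert (hE : ¬ IsBergeK4 E) (h : IsBergeK4 (insert e E)) :
    ∃ x ∈ e, ∃ y ∈ e, GoodPair E x y := by
  obtain ⟨a, b, c, d, hab, hac, had, hbc, hbd, hcd, f₁, f₂, f₃, f₄, f₅, f₆, h₁, h₂, h₃, h₄, h₅, h₆,
    hnodup, hinc⟩ := h
  have hmem : e ∈ [f₁, f₂, f₃, f₄, f₅, f₆] := by
    by_contra hnot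
    refine hE ⟨a, b, c, d, hab, hac, had, hbc, hbd, hcd, f₁, f₂, f₃, f₄, f₅, f₆, ?_⟩
    grind
  simp only [List.mem_cons, List.not_mem_nil, or_false] at hmem
  rcases hmem with rfl | rfl | rfl | rfl | rfl | rfl
  · have hD : BergeDiamond E a b c d f₂ f₃ f₄ f₅ f₆ := by constructor <;> grind
    exact ⟨a, by tauto, b, by tauto, hD.goodPair⟩
  · have hD : BergeDiamond E a c b d f₁ f₃ f₄ f₆ f₅ := by constructor <;> grind
    exact ⟨a, by tauto, c, by tauto, hD.goodPair⟩
  · have hD : BergeDiamond E a d b c f₁ f₂ f₅ f₆ f₄ := by constructor <;> grind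
    exact ⟨a, by tauto, d, by tauto, hD.goodPair⟩
  · have hD : BergeDiamond E b c a d f₁ f₅ f₂ f₆ f₃ := by constructor <;> grind
    exact ⟨b, by tauto, c, by tauto, hD.goodPair⟩
  · have hD : BergeDiamond E b d a c f₁ f₄ f₃ f₆ f₂ := by constructor <;> grind
    exact ⟨b, by tauto, d, by tauto, hD.goodPair⟩
  · have hD : BergeDiamond E c d a b f₂ f₄ f₃ f₅ f₁ := by constructor <;> grind
    exact ⟨c, by tauto, d, by tauto, hD.goodPair⟩

namespace IsK4Free

variable (hE : IsK4Free E)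
include hE

theorem eq_or_eq_of_tri (hD : BergeDiamond E u w x y p q r s t) (h : Tri E u w z) :
    z = x ∨ z = y := by
  have hmem : {u, w, z} ∈ [p, q, r, s, t] := by
    by_contra hnew
    exact hE.free (hD.isBergeK4 h.mem (by simp) (by simp) hnew)
  obtain ⟨hne, -, -, hinc⟩ := hD
  grind

theorem exists_bergeDiamond_of_tri (hxy : GoodPair E x y) (h : Tri E x y z) :
    ∃ w q r s t, BergeDiamond E x y z w {x, y, z} q r s t ∨
      BergeDiamond E y x z w {x, y, z} q r s t := by
  obtain ⟨a, b, p, q, r, s, t, hD⟩ := hxy.exists_bergeDiamond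
  wlog hza : z = a generalizing a b p q r s
  · have hzb := (hE.eq_or_eq_of_tri hD h).resolve_left hza
    exact this b a q p s r hD.symm_right hzb
  subst hza
  have hmem : {x, y, z} ∈ [p, q, r, s, t] := by
    by_contra hnew
    exact hE.free (hD.isBergeK4 h.mem (by simp) (by simp) hnew)
  obtain rfl | rfl : {x, y, z} = p ∨ {x, y, z} = r := by
    obtain ⟨hne, -, -, hinc⟩ := hD
    grind
  · exact ⟨b, q, r, s, t, .inl hD⟩
  · exact ⟨b, s, p, q, t, .inr hD.symm_left⟩

theorem three_le_hdeg (hxy : GoodPair E x y) (h : Tri E x y z) : 3 ≤ hdeg E z := by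
  obtain ⟨w, q, r, s, t, hD | hD⟩ := hE.exists_bergeDiamond_of_tri hxy h <;>
    obtain ⟨-, hmem, hnodup, hinc⟩ := hD <;>
    exact length_le_hdeg (l := [{x, y, z}, r, t]) (by grind) (by grind)

theorem forall_tri_or_forall_tri (hxy : GoodPair E x y) (hz : Tri E x y z) (hw : Tri E x y w)
    (hzw : z ≠ w) :
    (∀ c, Tri E x z c → c = y ∨ c = w) ∨ ∀ c, Tri E y z c → c = x ∨ c = w := by
  obtain ⟨w', q, r, s, t, hD | hD⟩ := hE.exists_bergeDiamond_of_tri hxy hz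
  · obtain rfl := (hE.eq_or_eq_of_tri hD hw).resolve_left hzw.symm
    exact .inl fun c hc => hE.eq_or_eq_of_tri (hD.rotate (by simp)) hc
  · obtain rfl := (hE.eq_or_eq_of_tri hD hw.left_swap).resolve_left hzw.symm
    exact .inr fun c hc => hE.eq_or_eq_of_tri (hD.rotate (by simp)) hc

theorem eq_or_eq_of_goodPair (hxy : GoodPair E x y) (ha : Tri E x y a) (hb : Tri E x y b)
    (hab : a ≠ b) (hc : Tri E x y c) : c = a ∨ c = b := by
  obtain ⟨z, w, p, q, r, s, t, hD⟩ := hxy.exists_bergeDiamond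
  have := hE.eq_or_eq_of_tri hD ha
  have := hE.eq_or_eq_of_tri hD hb
  have := hE.eq_or_eq_of_tri hD hc
  grind

theorem exists_tri_of_tri_of_tri (hxy : GoodPair E x y) (ha : Tri E x y a) (hb : Tri E x y b)
    (hab : a ≠ b) : ∃ c, Tri E a b c := by
  obtain ⟨z, w, p, q, r, s, t, hD⟩ := hxy.exists_bergeDiamond
  obtain ⟨c, hc, -⟩ := hE.uniform.exists_tri (f := t) (a := z) (b := w) hD.mem.2.2.2.2
    hD.inc.2.2.2.2.1 hD.inc.2.2.2.2.2 (by have := hD.ne; grind)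
  obtain rfl | rfl := hE.eq_or_eq_of_tri hD ha <;> obtain rfl | rfl := hE.eq_or_eq_of_tri hD hb
  · exact absurd rfl hab
  · exact ⟨c, hc⟩
  · exact ⟨c, hc.left_swap⟩
  · exact absurd rfl hab

theorem eq_or_eq_of_fan (hx : Tri E a x y) (hxz : Tri E a x z) (hyz : Tri E a y z)
    (hgood : GoodPair E y z) (h : Tri E y z d) : d = a ∨ d = x := by
  by_contra! hd
  obtain hy | hz := hE.forall_tri_or_forall_tri hgood hyz.rotate h hd.1.symm
  · obtain rfl | rfl := hy x hx.right_swap.left_swap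
    exacts [hxz.ne₂₃ rfl, hd.2 rfl]
  · obtain rfl | rfl := hz x hxz.right_swap.left_swap
    exacts [hx.ne₂₃ rfl, hd.2 rfl]

theorem exists_bergeDiamond_of_forall_tri_eq (hab : GoodPair E a b) (hub : GoodPair E u b)
    (h : Tri E u a b) (hua : ∀ c, Tri E u a c → c = b) :
    ∃ w q r s t, BergeDiamond E a b u w {a, b, u} q r s t ∧ Tri E a b w := by
  have hunique : ∀ f ∈ E, u ∈ f → a ∈ f → f = {u, a, b} := by
    intro f hf hu ha
    obtain ⟨c, hc, rfl⟩ := hE.uniform.exists_tri hf hu ha h.ne₁₂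
    rw [hua c hc]
  obtain ⟨w, q, r, s, t, hD | hD⟩ := hE.exists_bergeDiamond_of_tri hab h.rotate
  · refine ⟨w, q, r, s, t, hD, ?_⟩
    obtain ⟨w', q', r', s', t', hD' | hD'⟩ :=
      hE.exists_bergeDiamond_of_tri hub h.right_swap
    · obtain ⟨c, hc, rfl⟩ := hE.uniform.exists_tri (f := r') (a := a) (b := b)
        hD'.mem.2.2.1 hD'.inc.2.2.1.2 hD'.inc.2.2.1.1 h.ne₂₃
      have hcu : c ≠ u := by
        rintro rfl
        have := hD'.nodup
        grind
      exact (hE.eq_or_eq_of_tri hD hc).resolve_left hcu ▸ hc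
    · have := hunique r' hD'.mem.2.2.1 hD'.inc.2.2.1.1 hD'.inc.2.2.1.2
      have := hD'.nodup
      grind
  · have := hunique r hD.mem.2.2.1 hD.inc.2.2.1.2 hD.inc.2.2.1.1
    have := hD.nodup
    grind

theorem mem_or_mem_of_bergeDiamond (hD : BergeDiamond E u w x y {u, w, x} q r s t)
    (hwxy : Tri E w x y) (huy : GoodPair E u y) (hwy : ∀ c, Tri E w y c → c = x ∨ c = u) :
    x ∈ q ∨ x ∈ s := by
  by_contra! hx
  have hne := hD.ne
  have hinc := hD.inc
  obtain ⟨c, hc, rfl⟩ := hE.uniform.exists_tri hD.mem.2.2.2.1 hinc.2.2.2.1.1 hinc.2.2.2.1.2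
    hwxy.ne₁₃
  obtain rfl | rfl := hwy c hc
  · exact hx.2 (by simp)
  obtain ⟨d, hd, rfl⟩ := hE.uniform.exists_tri hD.mem.2.1 hinc.2.1.1 hinc.2.1.2 huy.ne
  have huwx : Tri E c w x := ⟨by grind, by grind, hwxy.ne₁₂, hD.mem.1⟩
  obtain rfl | rfl := hE.eq_or_eq_of_fan hwxy huwx.rotate hc huy.symm hd.left_swap
  · have := hD.nodup
    grind
  · exact hx.1 (by simp)

end IsK4Free

/-- A wheel with hub `b` and rim `x a y c`, together with a hyperedge on each diagonal of the
rim. -/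
theorem isBergeK4_of_wheel (hxa : Tri E b x a) (hay : Tri E b a y) (hyc : Tri E b y c)
    (hcx : Tri E b c x) (hxy : Tri E x y v) (hac : Tri E a c d) (hva : v ≠ a) (hvc : v ≠ c) :
    IsBergeK4 E := by
  refine ⟨x, a, c, y, hxa.ne₂₃, hcx.ne₂₃.symm, hxy.ne₁₂, hac.ne₁₂, hay.ne₂₃, hyc.ne₂₃.symm,
    {b, x, a}, {b, c, x}, {x, y, v}, {a, c, d}, {b, a, y}, {b, y, c}, hxa.mem, hcx.mem, hxy.mem,
    hac.mem, hay.mem, hyc.mem, ?_, by simp⟩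
  -- The six hyperedges already differ in which of the vertices `a`, `c`, `y` they contain.
  refine List.Nodup.of_map (fun f => (decide (a ∈ f), decide (c ∈ f), decide (y ∈ f))) ?_
  simp [hxa.ne₁₃.symm, hxa.ne₂₃.symm, hay.ne₁₃.symm, hay.ne₂₃, hay.ne₂₃.symm,
    hyc.ne₁₃.symm, hyc.ne₂₃, hyc.ne₂₃.symm, hcx.ne₂₃, hxy.ne₁₂.symm, hxy.ne₂₃, hac.ne₁₂,
    hac.ne₁₂.symm, hva.symm, hvc.symm]

/-- What is used about a vertex `v` of degree at most one in a saturated hypergraph: no good pair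
contains `v`, so a triple `{v, x, y}` that is not a hyperedge can only be saturated through
`(x, y)`. -/
structure IsLowVertex (E : Finset (Finset V)) (v : V) : Prop extends IsK4Free E where
  hdeg_le : hdeg E v ≤ 1
  goodPair_or_tri : ∀ x y, x ≠ v → y ≠ v → x ≠ y → GoodPair E x y ∨ Tri E v x y

theorem IsSaturated.isLowVertex [Fintype V] (hE : IsSaturated E) (hv : hdeg E v ≤ 1) :
    IsLowVertex E v where
  uniform := hE.1
  free := hE.2.1
  hdeg_le := hv
  goodPair_or_tri x y hx hy hxy := by
    by_cases hmem : {v, x, y} ∈ E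
    · exact .inr ⟨hx.symm, hy.symm, hxy, hmem⟩
    have hcard : ({v, x, y} : Finset V).card = 3 :=
      Finset.card_eq_three.2 ⟨v, x, y, hx.symm, hy.symm, hxy, rfl⟩
    obtain ⟨a, ha, b, hb, hab⟩ :=
      exists_goodPair_of_isBergeK4_insert hE.2.1 (hE.2.2 _ hcard hmem)
    have hne : ∀ {c d}, GoodPair E c d → c ≠ v := by
      rintro c d hcd rfl
      exact absurd hcd.two_le_hdeg (by omega)
    have := hne hab
    have := hne hab.symm
    have := hab.ne
    simp only [Finset.mem_insert, Finset.mem_singleton] at ha hb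
    grind [GoodPair.symm]

namespace IsLowVertex

variable (h : IsLowVertex E v)
include h

theorem ne_of_goodPair (hxy : GoodPair E x y) : x ≠ v := by
  rintro rfl
  exact absurd (hxy.two_le_hdeg.trans h.hdeg_le) (by norm_num)

theorem eq_of_mem (he : e ∈ E) (hve : v ∈ e) (hf : f ∈ E) (hvf : v ∈ f) : e = f :=
  Finset.card_le_one.1 h.hdeg_le e (Finset.mem_filter.2 ⟨he, hve⟩) f (Finset.mem_filter.2 ⟨hf, hvf⟩)

theorem ne_of_bergeDiamond (hD : BergeDiamond E u w x y p q r s t) : y ≠ v := by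
  rintro rfl
  have := h.eq_of_mem hD.mem.2.1 hD.inc.2.1.2 hD.mem.2.2.2.1 hD.inc.2.2.2.1.2
  have := hD.nodup
  grind

theorem not_goodPair_of_tri (hxy : Tri E v x y) : ¬ GoodPair E x y := fun hgood =>
  absurd ((h.three_le_hdeg hgood hxy.rotate).trans h.hdeg_le) (by norm_num)

theorem not_tri_of_ne (hxy : Tri E v x y) (hux : u ≠ x) (huy : u ≠ y) (a : V) : ¬ Tri E v u a := by
  intro hua
  have hu : u ∈ ({v, x, y} : Finset V) :=
    h.eq_of_mem hua.mem (by simp) hxy.mem (by simp) ▸ by simp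
  have := hua.ne₁₂
  grind

theorem goodPair_of_forall_not_tri (hu : ∀ a, ¬ Tri E v u a) (huv : u ≠ v) (hbv : b ≠ v)
    (hub : u ≠ b) : GoodPair E u b :=
  (h.goodPair_or_tri u b huv hbv hub).resolve_right (hu b)

/-- Otherwise the two other vertices of every hyperedge at `u` span a hyperedge with `v`, so there
is only one hyperedge at `u`. -/
theorem three_le_hdeg_of_forall_not_tri (hu : ∀ a, ¬ Tri E v u a) (hub : GoodPair E u b) :
    3 ≤ hdeg E u := by
  by_contra! hlt
  have huv := h.ne_of_goodPair hub
  have hstar : ∀ f ∈ E, u ∈ f → ∃ g ∈ E, v ∈ g ∧ f = insert u (g.erase v) := by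
    intro f hf huf
    obtain ⟨s, t, hust, rfl⟩ := h.uniform.exists_tri_of_mem hf huf
    have hsv : s ≠ v := by
      rintro rfl
      exact hu t hust.left_swap
    have htv : t ≠ v := by
      rintro rfl
      exact hu s hust.rotate.rotate
    obtain hst | hst := h.goodPair_or_tri s t hsv htv hust.ne₂₃
    · exact absurd (h.three_le_hdeg hst hust.rotate) (by omega)
    · exact ⟨_, hst.mem, by simp, by grind⟩
  obtain ⟨x, y, p, q, r, s, t, -, hmem, hnodup, hinc⟩ := hub.exists_bergeDiamond
  obtain ⟨g, hg, hvg, hp⟩ := hstar p hmem.1 hinc.1.1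
  obtain ⟨g', hg', hvg', hq⟩ := hstar q hmem.2.1 hinc.2.1.1
  have := h.eq_of_mem hg hvg hg' hvg'
  grind

theorem exists_bergeDiamond_of_tri_of_tri (hxy : Tri E v x y) (hxya : Tri E x y a) (hav : a ≠ v) :
    ∃ w q r s t, BergeDiamond E a x y w {a, x, y} q r s t := by
  have hax : GoodPair E a x := h.goodPair_of_forall_not_tri
    (h.not_tri_of_ne hxy hxya.ne₁₃.symm hxya.ne₂₃.symm) hav hxy.ne₁₂.symm hxya.ne₁₃.symm
  obtain ⟨w, q, r, s, t, hD | hD⟩ := h.exists_bergeDiamond_of_tri hax hxya.rotate.rotate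
  · exact ⟨w, q, r, s, t, hD⟩
  · exact absurd (hD.rotate (by simp)).goodPair (h.not_goodPair_of_tri hxy)

theorem exists_bergeDiamond_of_forall_mem (hxwc : Tri E x w c) (hwc : GoodPair E w c)
    (hwy : w ≠ y) (hwa : w ≠ a)
    (hx : ∀ f ∈ E, x ∈ f → f ∈ [{v, x, y}, {a, x, y}, {x, w, c}]) :
    ∃ m q r s t, BergeDiamond E w c x m {w, c, x} q r s t ∧ x ∉ q ∧ x ∉ s ∧
      (c = y ∧ m = a ∨ c = a ∧ m = y) := by
  have hwcx : ({w, c, x} : Finset V) = {x, w, c} := by grind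
  have hwv := h.ne_of_goodPair hwc
  have hcv := h.ne_of_goodPair hwc.symm
  obtain ⟨m, q, r, s, t, hD | hD⟩ := h.exists_bergeDiamond_of_tri hwc hxwc.rotate
  · have hnodup := hD.nodup
    have hr : r = {v, x, y} ∨ r = {a, x, y} := by
      have := hx r hD.mem.2.2.1 hD.inc.2.2.1.2
      grind
    have ht : t = {v, x, y} ∨ t = {a, x, y} := by
      have := hx t hD.mem.2.2.2.2 hD.inc.2.2.2.2.1
      grind
    have hxq : x ∉ q := by
      have := hx q hD.mem.2.1
      grind
    have hxs : x ∉ s := by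
      have := hx s hD.mem.2.2.2.1
      grind
    have hrt : r ≠ t := by grind
    clear hnodup hx
    have hmv := h.ne_of_bergeDiamond hD
    have := hD.ne
    have := hD.inc.2.2.1.1
    have := hD.inc.2.2.2.2.2
    exact ⟨m, q, r, s, t, hD, hxq, hxs, by grind⟩
  · have hr := hx r hD.mem.2.2.1 hD.inc.2.2.1.2
    have hrp : r ≠ {x, w, c} := by
      have := hD.nodup
      grind
    have := hD.inc.2.2.1.1
    have := hxwc.ne₁₂
    grind

theorem four_le_hdeg_of_tri_of_tri (hxy : Tri E v x y) (hxya : Tri E x y a) (hav : a ≠ v) :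
    4 ≤ hdeg E x := by
  by_contra! hlt
  obtain ⟨w, q, r, s, t, hD⟩ := h.exists_bergeDiamond_of_tri_of_tri hxy hxya hav
  have hay : ∀ c, Tri E a y c → c = x ∨ c = w := fun c hc =>
    h.eq_or_eq_of_tri (hD.rotate (by simp)) hc
  have hne := hD.ne
  have hwv := h.ne_of_bergeDiamond hD
  have hw : ∀ b, ¬ Tri E v w b := h.not_tri_of_ne hxy (by grind) (by grind)
  have hxedges : ∀ f ∈ E, x ∈ f → f ∈ [{v, x, y}, {a, x, y}, s] := by
    intro f hf hxf
    have := hxy.mem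
    have := hD.mem
    have := hD.nodup
    have := hD.inc
    exact mem_of_hdeg_le_length (by grind) (by grind) (Nat.le_of_lt_succ hlt) hf hxf
  obtain ⟨c, hc, rfl⟩ := h.uniform.exists_tri hD.mem.2.2.2.1 hD.inc.2.2.2.1.1 hD.inc.2.2.2.1.2
    (by grind)
  have hcv : c ≠ v := by
    rintro rfl
    exact hw x hc.rotate.rotate.right_swap
  have hwc : GoodPair E w c := h.goodPair_of_forall_not_tri hw hwv hcv hc.ne₂₃
  obtain ⟨m, q', r', s', t', hD', hxq, hxs, hcm⟩ :=
    h.exists_bergeDiamond_of_forall_mem hc hwc (by grind) (by grind) hxedges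
  have hwm : GoodPair E w m :=
    h.goodPair_of_forall_not_tri hw hwv (h.ne_of_bergeDiamond hD') (by grind)
  have hxmem : x ∈ q' ∨ x ∈ s' := by
    obtain ⟨rfl, rfl⟩ | ⟨rfl, rfl⟩ := hcm
    · exact h.mem_or_mem_of_bergeDiamond hD' hxya.left_swap hwm fun d hd => hay d hd.left_swap
    · exact h.mem_or_mem_of_bergeDiamond hD' hxya.rotate.rotate hwm hay
  exact hxmem.elim hxq hxs

/-- The hyperedge `{v, x, y}` has to be one of the three hyperedges of the diamond at `x`, and only
the one on `xw` is possible. -/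
theorem eq_of_bergeDiamond (hxy : Tri E v x y) (hx : hdeg E x ≤ 3)
    (hD : BergeDiamond E a b x w p q r s t) (ha : a ∉ ({v, x, y} : Finset V))
    (hb : b ∉ ({v, x, y} : Finset V)) : t = {v, x, y} ∧ w = y := by
  have hinc := hD.inc
  have hwv := h.ne_of_bergeDiamond hD
  have hmem : {v, x, y} ∈ [p, r, t] := by
    have := hD.mem
    have := hD.nodup
    exact mem_of_hdeg_le_length (by grind) (by grind) hx hxy.mem (by simp)
  have hp : p ≠ {v, x, y} := ne_of_mem_of_not_mem' hinc.1.1 ha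
  have hr : r ≠ {v, x, y} := ne_of_mem_of_not_mem' hinc.2.2.1.1 hb
  obtain rfl : {v, x, y} = t := by grind
  have := hD.ne
  exact ⟨rfl, by grind⟩

theorem goodPair_of_notMem (hxy : Tri E v x y) (ha : a ∉ ({v, x, y} : Finset V)) (hbv : b ≠ v)
    (hab : a ≠ b) : GoodPair E a b := by
  simp only [Finset.mem_insert, Finset.mem_singleton, not_or] at ha
  exact h.goodPair_of_forall_not_tri (h.not_tri_of_ne hxy ha.2.1 ha.2.2) ha.1 hbv hab

theorem tri_of_forall_tri_eq (hxy : Tri E v x y) (hx : hdeg E x ≤ 3)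
    (ha : a ∉ ({v, x, y} : Finset V)) (hb : b ∉ ({v, x, y} : Finset V)) (hxab : Tri E x a b)
    (hxa : ∀ c, Tri E x a c → c = b) : Tri E a b y := by
  have hab : GoodPair E a b := h.goodPair_of_notMem hxy ha (by grind) hxab.ne₂₃
  have hbx : GoodPair E b x := h.goodPair_of_notMem hxy hb hxy.ne₁₂.symm hxab.ne₁₃.symm
  obtain ⟨w, q, r, s, t, hD, hw⟩ := h.exists_bergeDiamond_of_forall_tri_eq hab hbx.symm hxab hxa
  exact (h.eq_of_bergeDiamond hxy hx hD ha hb).2 ▸ hw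

theorem notMem_of_tri (hxy : Tri E v x y) (hxy_eq : ∀ a, Tri E x y a → a = v)
    (hxab : Tri E x a b) (hne : ({x, a, b} : Finset V) ≠ {v, x, y}) :
    a ∉ ({v, x, y} : Finset V) := by
  have hav : a ≠ v := by
    rintro rfl
    exact hne (h.eq_of_mem hxab.mem (by simp) hxy.mem (by simp))
  have hay : a ≠ y := by
    rintro rfl
    obtain rfl := hxy_eq b hxab
    exact hne (by grind)
  simp [hav, hay, hxab.ne₁₂.symm]

/-- If `deg x = 3` then the hyperedges at `x` are `vxy`, `xab` and `xbc`, and saturation forces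
`aby`, `cby` and a hyperedge through `a` and `c`: these six form a Berge-K4 with core
`{x, a, c, y}`. -/
theorem four_le_hdeg_of_bergeDiamond (hxy : Tri E v x y) (hxy_eq : ∀ a, Tri E x y a → a = v)
    (hD : BergeDiamond E a b x w {a, b, x} q r s t) (ha : a ∉ ({v, x, y} : Finset V))
    (hb : b ∉ ({v, x, y} : Finset V)) : 4 ≤ hdeg E x := by
  by_contra! hlt
  have hx := Nat.le_of_lt_succ hlt
  obtain ⟨rfl, rfl⟩ := h.eq_of_bergeDiamond hxy hx hD ha hb
  have habx : ({a, b, x} : Finset V) = {x, a, b} := by grind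
  rw [habx] at hD
  have hne := hD.ne
  have hnodup := hD.nodup
  have hxab : Tri E x a b := ⟨by grind, by grind, by grind, hD.mem.1⟩
  obtain ⟨c, hxbc, rfl⟩ := h.uniform.exists_tri hD.mem.2.2.1 hD.inc.2.2.1.2 hD.inc.2.2.1.1
    hxab.ne₁₃
  have hc := h.notMem_of_tri hxy hxy_eq hxbc.right_swap (by grind)
  have hac : a ≠ c := by grind
  have hb_mem : ∀ f ∈ E, x ∈ f → f ≠ {v, x, w} → b ∈ f := by
    intro f hf hxf hfne
    have hmem : f ∈ [{x, a, b}, {x, b, c}, {v, x, w}] := by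
      have := hD.mem
      exact mem_of_hdeg_le_length (by grind) (by grind) hx hf hxf
    grind
  clear hnodup
  have hx_eq : ∀ a, a ∉ ({v, x, w} : Finset V) → a ≠ b → ∀ d, Tri E x a d → d = b := by
    intro a ha hab d hd
    have := hb_mem _ hd.mem (by simp) (ne_of_mem_of_not_mem' (a := a) (by simp) ha)
    have := hxab.ne₁₃
    grind
  have haby := h.tri_of_forall_tri_eq hxy hx ha hb hxab (hx_eq a ha hxab.ne₂₃)
  have hcby := h.tri_of_forall_tri_eq hxy hx hc hb hxbc.right_swap (hx_eq c hc hxbc.ne₂₃.symm)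
  have hbw := h.goodPair_of_notMem hxy hb hxy.ne₁₃.symm haby.ne₂₃
  obtain ⟨d, hd⟩ := h.exists_tri_of_tri_of_tri hbw haby.rotate hcby.rotate hac
  simp only [Finset.mem_insert, Finset.mem_singleton, not_or] at ha hc
  exact h.free (isBergeK4_of_wheel hxab.rotate.rotate haby.left_swap hcby.rotate hxbc.rotate
    hxy.rotate hd (Ne.symm ha.1) (Ne.symm hc.1))

theorem four_le_hdeg_of_forall_tri_eq (hxy : Tri E v x y) (hxy_eq : ∀ a, Tri E x y a → a = v)
    (hxb : GoodPair E x b) : 4 ≤ hdeg E x := by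
  obtain ⟨f, hf, hxf, hfne⟩ := exists_mem_notMem_of_hdeg_lt (l := [{v, x, y}]) hxb.two_le_hdeg
  obtain ⟨s, t, hxst, rfl⟩ := h.uniform.exists_tri_of_mem hf hxf
  have hs := h.notMem_of_tri hxy hxy_eq hxst (by simpa using hfne)
  have ht := h.notMem_of_tri hxy hxy_eq hxst.right_swap (by grind)
  have hst := h.goodPair_of_notMem hxy hs (by grind) hxst.ne₂₃
  obtain ⟨w, q, r, p, e, hD | hD⟩ := h.exists_bergeDiamond_of_tri hst hxst.rotate
  · exact h.four_le_hdeg_of_bergeDiamond hxy hxy_eq hD hs ht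
  · rw [Finset.insert_comm] at hD
    exact h.four_le_hdeg_of_bergeDiamond hxy hxy_eq hD ht hs

theorem four_le_hdeg_of_tri (hxy : Tri E v x y) (hxb : GoodPair E x b) : 4 ≤ hdeg E x := by
  by_cases hxy_eq : ∀ a, Tri E x y a → a = v
  · exact h.four_le_hdeg_of_forall_tri_eq hxy hxy_eq hxb
  · push Not at hxy_eq
    obtain ⟨a, hxya, hav⟩ := hxy_eq
    exact h.four_le_hdeg_of_tri_of_tri hxy hxya hav

end IsLowVertex

/-- The five triples of consecutive vertices of the cyclic sequence `p 0, …, p 4` are hyperedges.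
This is the structure forced around a vertex of degree three. -/
def TightPentagon (E : Finset (Finset V)) (p : Fin 5 → V) : Prop :=
  ∀ i, Tri E (p i) (p (i + 1)) (p (i + 2))

namespace IsK4Free

variable (hE : IsK4Free E)
include hE

theorem exists_mem_ne_of_tri (hab : GoodPair E a b) (h : Tri E a b u) :
    ∃ f ∈ E, u ∈ f ∧ f ≠ {a, b, u} ∧ (a ∈ f ∨ b ∈ f) := by
  obtain ⟨w, q, r, s, t, hD | hD⟩ := hE.exists_bergeDiamond_of_tri hab h
  all_goals
    have hr : r ≠ {a, b, u} := by
      have := hD.nodup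
      grind
  · exact ⟨r, hD.mem.2.2.1, hD.inc.2.2.1.2, hr, .inr hD.inc.2.2.1.1⟩
  · exact ⟨r, hD.mem.2.2.1, hD.inc.2.2.1.2, hr, .inl hD.inc.2.2.1.1⟩

theorem not_bergeDiamond_of_triangle (hxy : Tri E u x y) (hyw : Tri E u y w) (hwx : Tri E u w x)
    (hyw_good : GoodPair E y w) (hxw_good : GoodPair E x w) :
    ¬ BergeDiamond E x y u w {x, y, u} q {u, y, w} s {u, w, x} := by
  intro hD
  obtain ⟨hqr, hqs, hqt, hrs, hst⟩ : q ≠ {u, y, w} ∧ q ≠ s ∧ q ≠ {u, w, x} ∧ {u, y, w} ≠ s ∧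
      s ≠ {u, w, x} := by
    have := hD.nodup
    simp only [List.nodup_cons, List.mem_cons, not_or] at this
    tauto
  obtain ⟨d, hd, rfl⟩ := hE.uniform.exists_tri hD.mem.2.1 hD.inc.2.1.1 hD.inc.2.1.2 hwx.ne₂₃.symm
  obtain ⟨d', hd', rfl⟩ := hE.uniform.exists_tri hD.mem.2.2.2.1 hD.inc.2.2.2.1.1
    hD.inc.2.2.2.1.2 hyw.ne₂₃
  have hdu : d ≠ u := by
    rintro rfl
    exact hqt (by grind)
  have hdu' : d' ≠ u := by
    rintro rfl
    exact hrs (by grind)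
  obtain rfl := (hE.eq_or_eq_of_fan hxy.right_swap hyw hwx.right_swap hxw_good hd).resolve_left hdu
  obtain rfl := (hE.eq_or_eq_of_fan hxy hwx.right_swap hyw hyw_good hd').resolve_left hdu'
  exact hqs (by grind)

theorem eq_or_eq_or_eq_of_forall_mem (hc : Tri E u w c) (hwc : GoodPair E w c)
    (hu : ∀ f ∈ E, u ∈ f → f ∈ [{x, y, u}, {u, y, b}, {u, w, c}]) (hwx : w ≠ x) (hwy : w ≠ y)
    (hcy : c ≠ y) : w = b ∨ c = x ∨ c = b := by
  obtain ⟨f, hf, huf, hfne, hmem⟩ := hE.exists_mem_ne_of_tri hwc hc.rotate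
  have := hc.ne₁₂
  have := hc.ne₁₃
  have := hu f hf huf
  simp only [List.mem_cons, List.not_mem_nil, or_false] at this
  obtain rfl | rfl | rfl := this
  · grind
  · grind
  · exact absurd (by grind) hfne

theorem exists_path_of_bergeDiamond (hu : ∀ a b, Tri E u a b → GoodPair E u a ∧ GoodPair E a b)
    (h3 : hdeg E u ≤ 3) (hD : BergeDiamond E x y u w {x, y, u} q r s t) :
    ∃ a b c d, [a, b, c, d].Nodup ∧ Tri E u a b ∧ Tri E u b c ∧ Tri E u c d := by
  have hne := hD.ne
  have hxy : Tri E u x y := Tri.rotate (Tri.rotate ⟨by grind, by grind, by grind, hD.mem.1⟩)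
  obtain ⟨b, hb, rfl⟩ := hE.uniform.exists_tri hD.mem.2.2.1 hD.inc.2.2.1.2 hD.inc.2.2.1.1
    hxy.ne₁₃
  obtain ⟨c, hc, rfl⟩ := hE.uniform.exists_tri hD.mem.2.2.2.2 hD.inc.2.2.2.2.1 hD.inc.2.2.2.2.2
    (by grind)
  obtain ⟨hpr, hpt, hrt⟩ : {x, y, u} ≠ ({u, y, b} : Finset V) ∧
      {x, y, u} ≠ ({u, w, c} : Finset V) ∧ {u, y, b} ≠ ({u, w, c} : Finset V) := by
    have := hD.nodup
    simp only [List.nodup_cons, List.mem_cons, not_or] at this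
    tauto
  have hlink : ∀ f ∈ E, u ∈ f → f ∈ [{x, y, u}, {u, y, b}, {u, w, c}] := by
    intro f hf huf
    exact mem_of_hdeg_le_length (by simp [*]) (by simp [hD.mem]) h3 hf huf
  have hbx : b ≠ x := by
    rintro rfl
    exact hpr (by grind)
  have hcy : c ≠ y := by
    rintro rfl
    obtain rfl | rfl :=
      hE.eq_or_eq_of_goodPair (hu _ _ hb).1 hb hxy.right_swap hbx hc.right_swap
    · exact hrt (by grind)
    · simp at hne
  have hmeet : w = b ∨ c = x ∨ c = b := hE.eq_or_eq_or_eq_of_forall_mem hc (hu _ _ hc).2 hlink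
    (by grind) (by grind) hcy
  have htriangle : ¬ (w = b ∧ c = x) := by
    rintro ⟨rfl, rfl⟩
    exact hE.not_bergeDiamond_of_triangle hxy hb hc (hu _ _ hb).2 (hu _ _ hc).2.symm hD
  have := hxy.ne₂₃
  have := hc.ne₂₃
  have := hb.ne₂₃
  obtain rfl | rfl | rfl := hmeet
  · exact ⟨x, y, w, c, by grind, hxy, hb, hc⟩
  · exact ⟨b, y, c, w, by grind, hb.right_swap, hxy.right_swap, hc.right_swap⟩
  · exact ⟨x, y, c, w, by grind, hxy, hb, hc.right_swap⟩

theorem exists_path (hu : ∀ a b, Tri E u a b → GoodPair E u a ∧ GoodPair E a b)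
    (h3 : hdeg E u ≤ 3) (hxy : Tri E u x y) :
    ∃ a b c d, [a, b, c, d].Nodup ∧ Tri E u a b ∧ Tri E u b c ∧ Tri E u c d := by
  obtain ⟨w, q, r, s, t, hD | hD⟩ := hE.exists_bergeDiamond_of_tri (hu x y hxy).2 hxy.rotate
  · exact hE.exists_path_of_bergeDiamond hu h3 hD
  · rw [Finset.insert_comm] at hD
    exact hE.exists_path_of_bergeDiamond hu h3 hD

theorem eq_of_tri_of_path (hu : ∀ a b, Tri E u a b → GoodPair E u a ∧ GoodPair E a b)
    (hne : [a, b, c, d].Nodup) (hab : Tri E u a b) (hbc : Tri E u b c) (hcd : Tri E u c d)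
    (hz : Tri E b c z) : z = u := by
  have hb := hE.forall_tri_or_forall_tri (hu b c hbc).1 hbc hab.right_swap (by grind)
  have hc := hE.forall_tri_or_forall_tri (hu c d hcd).1 hbc.right_swap hcd (by grind)
  have hb' := hb.resolve_left fun h => by
    have := h d hcd
    grind
  have hc' := hc.resolve_left fun h => by
    have := h a hab.right_swap
    grind
  have := hb' z hz
  have := hc' z hz.left_swap
  grind

theorem tri_of_path (hu : ∀ a b, Tri E u a b → GoodPair E u a ∧ GoodPair E a b)
    (h3 : hdeg E u ≤ 3) (hne : [a, b, c, d].Nodup) (hab : Tri E u a b) (hbc : Tri E u b c)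
    (hcd : Tri E u c d) : Tri E a b d := by
  have hnodup : [{u, a, b}, {u, b, c}, ({u, c, d} : Finset V)].Nodup := by
    refine List.Nodup.of_map (fun f => (decide (a ∈ f), decide (b ∈ f))) ?_
    have := hab.ne₁₂
    have := hbc.ne₁₂
    grind
  have hlink : ∀ f ∈ E, u ∈ f → f = {u, a, b} ∨ f = {u, b, c} ∨ f = {u, c, d} := by
    intro f hf huf
    simpa using mem_of_hdeg_le_length hnodup (by simp [hab.mem, hbc.mem, hcd.mem]) h3 hf huf
  have hua : ∀ z, Tri E u a z → z = b := by
    intro z hz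
    have ha : a ∈ ({u, a, z} : Finset V) := by simp
    have hz' : z ∈ ({u, a, z} : Finset V) := by simp
    have := hz.ne₁₂
    have := hz.ne₁₃
    have := hz.ne₂₃
    obtain h | h | h := hlink _ hz.mem (by simp) <;> rw [h] at ha hz' <;> grind
  obtain ⟨w, q, r, s, t, hD, habw⟩ := hE.exists_bergeDiamond_of_forall_tri_eq (hu a b hab).2
    (hu b c hbc).1 hab hua
  have hwu : u ≠ w := by
    have := hD.ne
    grind
  have hwc : w ≠ c := by
    rintro rfl
    exact hab.ne₁₂ (hE.eq_of_tri_of_path hu hne hab hbc hcd habw.rotate).symm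
  have hwt := hD.inc.2.2.2.2.2
  have := habw.ne₁₃
  have := habw.ne₂₃
  obtain rfl : w = d := by
    obtain rfl | rfl | rfl := hlink t hD.mem.2.2.2.2 hD.inc.2.2.2.2.1 <;>
      simp only [Finset.mem_insert, Finset.mem_singleton] at hwt <;> grind
  exact habw

theorem exists_tightPentagon (hu : ∀ a b, Tri E u a b → GoodPair E u a ∧ GoodPair E a b)
    (h3 : hdeg E u ≤ 3) (hxy : Tri E u x y) : ∃ p, TightPentagon E p ∧ p 0 = u := by
  obtain ⟨a, b, c, d, hne, hab, hbc, hcd⟩ := hE.exists_path hu h3 hxy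
  have habd := hE.tri_of_path hu h3 hne hab hbc hcd
  have hdca := hE.tri_of_path hu h3 (by grind) hcd.right_swap hbc.right_swap
    hab.right_swap
  refine ⟨![u, b, a, d, c], fun i => ?_, rfl⟩
  fin_cases i
  exacts [hab.right_swap, habd.left_swap, hdca.rotate.rotate, hcd.rotate.left_swap,
    hbc.rotate.rotate]

end IsK4Free

namespace TightPentagon

variable {p : Fin 5 → V} {i j : Fin 5}

theorem shift (hp : TightPentagon E p) (k : Fin 5) : TightPentagon E fun i => p (k + i) :=
  fun i => by simpa only [add_assoc] using hp (k + i)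

theorem index_cases :
    ∀ i j : Fin 5, i = j ∨ j = i + 1 ∨ j = i + 2 ∨ i = j + 1 ∨ i = j + 2 := by
  decide

theorem injective (hp : TightPentagon E p) : p.Injective := by
  intro i j hij
  obtain h | rfl | rfl | rfl | rfl := index_cases i j
  exacts [h, absurd hij (hp i).ne₁₂, absurd hij (hp i).ne₁₃, absurd hij.symm (hp j).ne₁₂,
    absurd hij.symm (hp j).ne₁₃]

theorem four_le_hdeg (hp : TightPentagon E p) (hf : f ∈ E) (hi : p i ∈ f) (hw : w ∈ f)
    (hwp : w ∉ Set.range p) : 4 ≤ hdeg E (p i) := by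
  wlog hi0 : i = 0 generalizing p i
  · simpa using this (hp.shift i) (i := 0) (by simpa using hi)
      (fun ⟨j, hj⟩ => hwp ⟨i + j, hj⟩) rfl
  subst hi0
  have hinj := hp.injective
  simp only [Set.mem_range, not_exists] at hwp
  refine length_le_hdeg (l := [f, {p 0, p 1, p 2}, {p 4, p 0, p 1}, {p 3, p 4, p 0}]) ?_ ?_
  · refine List.Nodup.of_map (fun f => (decide (w ∈ f), decide (p 2 ∈ f), decide (p 3 ∈ f))) ?_
    simp [hw, hinj.eq_iff, fun i => Ne.symm (hwp i)]
  · simpa [hf, hi] using ⟨(hp 0).mem, (hp 4).mem, (hp 3).mem⟩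

theorem two_le_hdeg (hp : TightPentagon E p) (i : Fin 5) : 2 ≤ hdeg E (p i) := by
  wlog hi0 : i = 0 generalizing p i
  · simpa using this (hp.shift i) 0 rfl
  subst hi0
  refine length_le_hdeg (l := [{p 0, p 1, p 2}, {p 4, p 0, p 1}]) ?_ ?_
  · refine List.Nodup.of_map (fun f => decide (p 2 ∈ f)) ?_
    simp [hp.injective.eq_iff]
  · simpa using ⟨(hp 0).mem, (hp 4).mem⟩

theorem eq_of_tri_zero_two (hp : TightPentagon E p) (hE : IsK4Free E)
    (hgood : ∀ i j, i ≠ j → GoodPair E (p i) (p j)) (hz : Tri E (p 0) (p 2) z) : z = p 1 := by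
  have hinj := hp.injective
  have h₀ := hE.forall_tri_or_forall_tri (hgood 0 1 (by decide)) (hp 0) (hp 4).rotate
    (hinj.ne (by decide))
  have h₁ := hE.forall_tri_or_forall_tri (hgood 2 1 (by decide)) (hp 0).rotate.rotate.right_swap
    (hp 1).left_swap (hinj.ne (by decide))
  obtain h₀ := h₀.resolve_right fun h => by
    simpa [hinj.eq_iff] using h _ (hp 1)
  obtain h₁ := h₁.resolve_right fun h => by
    simpa [hinj.eq_iff] using h _ (hp 4).rotate.left_swap
  obtain rfl | rfl := h₀ z hz
  · rfl
  · simpa [hinj.eq_iff] using h₁ _ hz.left_swap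

theorem mem_range_of_tri (hp : TightPentagon E p) (hE : IsK4Free E)
    (hgood : ∀ i j, i ≠ j → GoodPair E (p i) (p j)) (h : Tri E (p i) (p j) z) :
    z ∈ Set.range p := by
  wlog hij : j = i + 1 ∨ j = i + 2 generalizing i j
  · exact this h.left_swap (((index_cases i j).resolve_left fun hij => h.ne₁₂ (congrArg p hij)).elim
      (fun h => absurd (.inl h) hij) fun h => h.resolve_left fun h => hij (.inr h))
  obtain rfl | rfl := hij
  · obtain rfl | rfl := hE.eq_or_eq_of_goodPair (hgood i (i + 1) (by simp)) (hp i)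
      (by simpa [add_assoc] using (hp (i + 4)).rotate) (hp.injective.ne (by simp)) h
    exacts [⟨_, rfl⟩, ⟨_, rfl⟩]
  · exact ⟨i + 1, ((hp.shift i).eq_of_tri_zero_two hE (fun j k hjk => hgood _ _ (by simpa))
      (by simpa using h)).symm⟩

theorem range_subset {S : Set V} (hp : TightPentagon E p)
    (hS : ∀ a ∈ S, ∀ b ∈ S, ∀ c, Tri E a b c → c ∈ S) (hij : i ≠ j) (hi : p i ∈ S)
    (hj : p j ∈ S) : Set.range p ⊆ S := by
  have hstep : ∀ k, p k ∈ S → p (k + 1) ∈ S → Set.range p ⊆ S := by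
    intro k h₀ h₁
    have h₂ := hS _ h₀ _ h₁ _ (hp k)
    have h₃ := hS _ h₁ _ h₂ _ (by simpa [add_assoc] using hp (k + 1))
    have h₄ := hS _ h₂ _ h₃ _ (by simpa [add_assoc] using hp (k + 2))
    have hcases : ∀ k l : Fin 5, l = k ∨ l = k + 1 ∨ l = k + 2 ∨ l = k + 3 ∨ l = k + 4 := by
      decide
    rintro - ⟨l, rfl⟩
    obtain rfl | rfl | rfl | rfl | rfl := hcases k l
    exacts [h₀, h₁, h₂, h₃, h₄]
  have hskip : ∀ k, p k ∈ S → p (k + 2) ∈ S → Set.range p ⊆ S := fun k h₀ h₂ =>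
    hstep k h₀ (hS _ h₀ _ h₂ _ (hp k).right_swap)
  obtain rfl | rfl | rfl | rfl | rfl := index_cases i j
  exacts [absurd rfl hij, hstep _ hi hj, hskip _ hi hj, hstep _ hj hi, hskip _ hj hi]

theorem mem_range_of_hdeg_le (hp : TightPentagon E p) (h3 : hdeg E (p i) ≤ 3) (hf : f ∈ E)
    (hi : p i ∈ f) (hz : z ∈ f) : z ∈ Set.range p := by
  by_contra hzp
  exact absurd ((hp.four_le_hdeg hf hi hz hzp).trans h3) (by norm_num)

theorem exists_mem_mem_of_hdeg_le (hp : TightPentagon E p) (h3 : hdeg E (p i) ≤ 3)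
    (hgood : GoodPair E (p i) w) :
    ∃ x ∈ Set.range p, ∃ y ∈ Set.range p, ∃ r ∈ E, ∃ s ∈ E, x ≠ y ∧ r ≠ s ∧
      (w ∈ r ∧ x ∈ r) ∧ w ∈ s ∧ y ∈ s := by
  obtain ⟨x, y, q, q', r, s, t, hD⟩ := hgood.exists_bergeDiamond
  have hrs : r ≠ s := by
    have := hD.nodup
    grind
  have hxy : x ≠ y := by
    have := hD.ne
    grind
  obtain ⟨-, ⟨hq, hq', hr, hs, -⟩, -, hinc⟩ := hD
  exact ⟨x, hp.mem_range_of_hdeg_le h3 hq hinc.1.1 hinc.1.2, y,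
    hp.mem_range_of_hdeg_le h3 hq' hinc.2.1.1 hinc.2.1.2, r, hr, s, hs, hxy, hrs, hinc.2.2.1,
    hinc.2.2.2.1⟩

end TightPentagon

section Counting

theorem hdeg_le_hdeg_erase_add_one (e : Finset V) : hdeg E u ≤ hdeg (E.erase e) u + 1 := by
  rw [hdeg, hdeg, Finset.filter_erase]
  exact Nat.sub_le_iff_le_add.1 (Finset.pred_card_le_card_erase)

theorem hdeg_erase_of_notMem (hu : u ∉ e) : hdeg (E.erase e) u = hdeg E u := by
  rw [hdeg, hdeg, Finset.filter_erase, Finset.erase_eq_of_notMem]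
  exact fun h => hu (Finset.mem_filter.1 h).2

theorem three_mul_add_card_le [Fintype V] {t : Finset V} (hE : Is3Uniform E) (hvt : v ∉ t)
    (h3 : ∀ u ≠ v, 3 ≤ hdeg E u) (h4 : ∀ u ∈ t, 4 ≤ hdeg E u) :
    3 * (Fintype.card V - 1) + t.card ≤ 3 * E.card := by
  have ht : t ⊆ Finset.univ.erase v := fun u hu =>
    Finset.mem_erase.2 ⟨fun h => hvt (h ▸ hu), Finset.mem_univ u⟩
  calc 3 * (Fintype.card V - 1) + t.card
      = ∑ u ∈ Finset.univ.erase v, (3 + if u ∈ t then 1 else 0) := by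
        rw [Finset.sum_add_distrib, Finset.sum_const, Finset.card_erase_of_mem (Finset.mem_univ v),
          Finset.card_univ, smul_eq_mul, mul_comm, Finset.sum_boole, Nat.cast_id,
          Finset.filter_mem_eq_inter, Finset.inter_eq_right.2 ht]
    _ ≤ ∑ u ∈ Finset.univ.erase v, hdeg E u := by
        refine Finset.sum_le_sum fun u hu => ?_
        split_ifs with hut
        exacts [h4 u hut, h3 u (Finset.ne_of_mem_erase hu)]
    _ ≤ ∑ u, hdeg E u := Finset.sum_le_sum_of_subset (Finset.erase_subset v Finset.univ)
    _ = 3 * E.card := sum_hdeg hE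

omit [DecidableEq V] in
theorem exists_ne_notMem_range [Fintype V] (hV : 7 ≤ Fintype.card V) (v : V) (p : Fin 5 → V) :
    ∃ w, w ≠ v ∧ w ∉ Set.range p := by
  classical
  have hcard : (insert v (Finset.univ.image p)).card < (Finset.univ : Finset V).card := by
    have := Finset.card_insert_le v (Finset.univ.image p)
    have : (Finset.univ.image p).card ≤ 5 := Finset.card_image_le
    rw [Finset.card_univ]
    omega
  obtain ⟨w, -, hw⟩ := Finset.exists_mem_notMem_of_card_lt_card hcard
  exact ⟨w, by simpa [not_or] using hw⟩

end Counting

namespace IsLowVertex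

variable (h : IsLowVertex E v)
include h

theorem notMem_range {p : Fin 5 → V} (hp : TightPentagon E p) : v ∉ Set.range p := by
  rintro ⟨i, rfl⟩
  exact absurd ((hp.two_le_hdeg i).trans h.hdeg_le) (by norm_num)

section Fintype

variable [Fintype V]

theorem exists_goodPair (hV : 4 ≤ Fintype.card V) (huv : u ≠ v) : ∃ b, GoodPair E u b := by
  obtain ⟨w, hw, z, hz, hwz⟩ : ∃ w ∈ ({u, v} : Finset V)ᶜ, ∃ z ∈ ({u, v} : Finset V)ᶜ, w ≠ z := by
    rw [← Finset.one_lt_card, Finset.card_compl, Finset.card_pair huv]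
    omega
  simp only [Finset.mem_compl, Finset.mem_insert, Finset.mem_singleton, not_or] at hw hz
  by_contra! hgood
  have huw := (h.goodPair_or_tri u w huv hw.2 (Ne.symm hw.1)).resolve_left (hgood w)
  have huz := (h.goodPair_or_tri u z huv hz.2 (Ne.symm hz.1)).resolve_left (hgood z)
  have hmem : w ∈ ({v, u, z} : Finset V) := by
    simp [← h.eq_of_mem huw.mem (by simp) huz.mem (by simp)]
  grind

theorem three_le_hdeg_of_ne (hV : 4 ≤ Fintype.card V) (huv : u ≠ v) : 3 ≤ hdeg E u := by
  obtain ⟨b, hub⟩ := h.exists_goodPair hV huv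
  by_cases hu : ∀ a, ¬ Tri E v u a
  · exact h.three_le_hdeg_of_forall_not_tri hu hub
  · push Not at hu
    obtain ⟨a, hua⟩ := hu
    exact (Nat.le_succ 3).trans (h.four_le_hdeg_of_tri hua hub)

end Fintype

end IsLowVertex

theorem four_le_hdeg_erase_of_forall_tri [Fintype V] (hV : 7 ≤ Fintype.card V) (hxy : Tri E v x y)
    (hall : ∀ u ∉ ({v, x, y} : Finset V), Tri E u x y) : 4 ≤ hdeg (E.erase {v, x, y}) x := by
  have hcard : 4 ≤ ({v, x, y} : Finset V)ᶜ.card := by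
    have := Finset.card_le_three (a := v) (b := x) (c := y)
    rw [Finset.card_compl]
    omega
  refine hcard.trans (Finset.card_le_card_of_injOn (fun u => {u, x, y}) ?_ ?_)
  · intro u hu
    have hu := Finset.mem_compl.1 hu
    simp only [Finset.mem_insert, Finset.mem_singleton, not_or] at hu
    refine Finset.mem_filter.2
      ⟨Finset.mem_erase.2 ⟨fun (heq : ({u, x, y} : Finset V) = {v, x, y}) => ?_,
        (hall u (by simp [hu])).mem⟩, by simp⟩
    have hv : v ∈ ({u, x, y} : Finset V) := heq.symm ▸ Finset.mem_insert_self v {x, y}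
    simp [Ne.symm hu.1, hxy.ne₁₂, hxy.ne₁₃] at hv
  · intro u hu w _ (heq : ({u, x, y} : Finset V) = {w, x, y})
    have hu := Finset.mem_compl.1 hu
    have huw : u ∈ ({w, x, y} : Finset V) := heq ▸ Finset.mem_insert_self u {x, y}
    simp only [Finset.mem_insert, Finset.mem_singleton] at hu huw
    tauto

namespace IsLowVertex

variable (h : IsLowVertex E v)
include h

theorem exists_tightPentagon_of_forall_notMem (huv : u ≠ v)
    (hu : ∀ f ∈ E, u ∈ f → v ∉ f) (hvu : ∀ a b, Tri E v a b → ¬ Tri E u a b)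
    (h3 : hdeg E u ≤ 3) (hub : GoodPair E u b) : ∃ p, TightPentagon E p ∧ p 0 = u := by
  have hno : ∀ a, ¬ Tri E v u a := fun a hua => hu _ hua.mem (by simp) (by simp)
  have hlink : ∀ a b, Tri E u a b → GoodPair E u a ∧ GoodPair E a b := by
    intro a b hab
    have hv := hu _ hab.mem (by simp)
    simp only [Finset.mem_insert, Finset.mem_singleton, not_or] at hv
    exact ⟨h.goodPair_of_forall_not_tri hno huv (Ne.symm hv.2.1) hab.ne₁₂,
      (h.goodPair_or_tri a b (Ne.symm hv.2.1) (Ne.symm hv.2.2) hab.ne₂₃).resolve_right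
        fun hvab => hvu a b hvab hab⟩
  obtain ⟨f, hf, huf, -⟩ := exists_mem_notMem_of_hdeg_lt (l := []) (E := E) (v := u)
    (two_pos.trans_le hub.two_le_hdeg)
  obtain ⟨a, b, hab, -⟩ := h.uniform.exists_tri_of_mem hf huf
  exact h.exists_tightPentagon hlink h3 hab

section Covered

theorem notMem_of_notMem (hxy : Tri E v x y) (hu : u ∉ ({v, x, y} : Finset V)) (hf : f ∈ E)
    (huf : u ∈ f) : v ∉ f := fun hvf =>
  hu (h.eq_of_mem hf hvf hxy.mem (by simp) ▸ huf)

theorem tightPentagon_erase {p : Fin 5 → V} (hp : TightPentagon E p) (hv : v ∈ e) :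
    TightPentagon (E.erase e) p := fun i =>
  ⟨(hp i).ne₁₂, (hp i).ne₁₃, (hp i).ne₂₃, Finset.mem_erase.2 ⟨fun heq => by
    rw [← heq] at hv
    simp only [Finset.mem_insert, Finset.mem_singleton] at hv
    obtain hv | hv | hv := hv <;> exact h.notMem_range hp ⟨_, hv.symm⟩, (hp i).mem⟩⟩

variable [Fintype V]

theorem exists_four_le_hdeg_erase (hV : 7 ≤ Fintype.card V) (hxy : Tri E v x y) :
    ∃ z ≠ v, 4 ≤ hdeg (E.erase {v, x, y}) z := by
  by_cases hall : ∀ u ∉ ({v, x, y} : Finset V), Tri E u x y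
  · exact ⟨x, hxy.ne₁₂.symm, four_le_hdeg_erase_of_forall_tri hV hxy hall⟩
  push Not at hall
  obtain ⟨u, hu, huxy⟩ := hall
  by_contra! hlt
  have huv : u ≠ v := fun huv => hu (by simp [huv])
  have h3 : hdeg E u ≤ 3 := hdeg_erase_of_notMem hu ▸ Nat.le_of_lt_succ (hlt u huv)
  obtain ⟨b, hub⟩ := h.exists_goodPair (by omega) huv
  have hvu : ∀ a b, Tri E v a b → ¬ Tri E u a b := by
    intro a b hvab huab
    have heq := h.eq_of_mem hvab.mem (by simp) hxy.mem (by simp)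
    have ha : a ∈ ({v, x, y} : Finset V) := heq ▸ by simp
    have hb : b ∈ ({v, x, y} : Finset V) := heq ▸ by simp
    simp only [Finset.mem_insert, Finset.mem_singleton, hvab.ne₁₂.symm, hvab.ne₁₃.symm,
      false_or] at ha hb
    obtain rfl | rfl := ha <;> obtain rfl | rfl := hb
    exacts [huab.ne₂₃ rfl, huxy huab, huxy huab.right_swap, huab.ne₂₃ rfl]
  obtain ⟨p, hp, rfl⟩ := h.exists_tightPentagon_of_forall_notMem huv
    (fun f hf huf => h.notMem_of_notMem hxy hu hf huf) hvu h3 hub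
  obtain ⟨w, hwv, hwp⟩ := exists_ne_notMem_range hV v p
  have hno : ∀ a, ¬ Tri E v (p 0) a := fun a hua =>
    h.notMem_of_notMem hxy hu hua.mem (by simp) (by simp)
  have huw := h.goodPair_of_forall_not_tri hno huv hwv fun h => hwp ⟨0, h⟩
  obtain ⟨x', hx', y', hy', r, hr, s, hs, hxy', hrs, ⟨hwr, hxr⟩, hws, hys⟩ :=
    hp.exists_mem_mem_of_hdeg_le h3 huw
  have hp' := h.tightPentagon_erase hp (Finset.mem_insert_self v {x, y})
  obtain ⟨i, rfl⟩ := hx'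
  obtain ⟨j, rfl⟩ := hy'
  have hv : ∀ k, p k ≠ v := fun k hk => h.notMem_range hp ⟨k, hk⟩
  by_cases hr' : r = {v, x, y}
  · have hs' : s ∈ E.erase {v, x, y} := Finset.mem_erase.2 ⟨fun hs' => hrs (hr'.trans hs'.symm), hs⟩
    exact (hlt _ (hv j)).not_ge (hp'.four_le_hdeg hs' hys hws hwp)
  · exact (hlt _ (hv i)).not_ge
      (hp'.four_le_hdeg (Finset.mem_erase.2 ⟨hr', hr⟩) hxr hwr hwp)

theorem card_lt_card_of_tri (hV : 7 ≤ Fintype.card V) (hxy : Tri E v x y) :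
    Fintype.card V < E.card := by
  obtain ⟨z, hzv, hz⟩ := h.exists_four_le_hdeg_erase hV hxy
  have hsum := three_mul_add_card_le (E := E.erase {v, x, y}) (v := v) (t := {z})
    (fun e he => h.uniform e (Finset.mem_of_mem_erase he)) (by simpa using hzv.symm)
    (fun u huv => ?_) (by simpa using hz)
  · rw [Finset.card_erase_of_mem hxy.mem, Finset.card_singleton] at hsum
    omega
  · by_cases hu : u ∈ ({v, x, y} : Finset V)
    · obtain ⟨b, hub⟩ := h.exists_goodPair (by omega) huv
      have h4 : 4 ≤ hdeg E u := by
        simp only [Finset.mem_insert, Finset.mem_singleton, huv, false_or] at hu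
        obtain rfl | rfl := hu
        exacts [h.four_le_hdeg_of_tri hxy hub, h.four_le_hdeg_of_tri hxy.right_swap hub]
      exact Nat.le_of_succ_le_succ (h4.trans (hdeg_le_hdeg_erase_add_one _))
    · rw [hdeg_erase_of_notMem hu]
      exact h.three_le_hdeg_of_ne (by omega) huv

end Covered

section Isolated

variable (hv : hdeg E v = 0)
include hv

omit h in
theorem notMem_of_hdeg_eq_zero (hf : f ∈ E) : v ∉ f := fun hvf =>
  (Finset.card_pos.2 ⟨f, Finset.mem_filter.2 ⟨hf, hvf⟩⟩).ne' hv

theorem goodPair_of_hdeg_eq_zero (hxv : x ≠ v) (hyv : y ≠ v) (hxy : x ≠ y) : GoodPair E x y :=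
  (h.goodPair_or_tri x y hxv hyv hxy).resolve_right fun hvxy =>
    notMem_of_hdeg_eq_zero hv hvxy.mem (by simp)

theorem mem_range_of_tri {p : Fin 5 → V} (hp : TightPentagon E p) {i j : Fin 5}
    (hz : Tri E (p i) (p j) z) : z ∈ Set.range p :=
  hp.mem_range_of_tri h.toIsK4Free (fun k l hkl => h.goodPair_of_hdeg_eq_zero hv
    (fun hk => h.notMem_range hp ⟨k, hk⟩) (fun hl => h.notMem_range hp ⟨l, hl⟩)
    (hp.injective.ne hkl)) hz

variable [Fintype V]

theorem exists_tightPentagon_of_hdeg_eq_zero (hV : 4 ≤ Fintype.card V) (huv : u ≠ v)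
    (h3 : hdeg E u ≤ 3) : ∃ p, TightPentagon E p ∧ p 0 = u := by
  obtain ⟨b, hub⟩ := h.exists_goodPair hV huv
  exact h.exists_tightPentagon_of_forall_notMem huv
    (fun f hf _ => notMem_of_hdeg_eq_zero hv hf)
    (fun a b hvab _ => notMem_of_hdeg_eq_zero hv hvab.mem (by simp)) h3 hub

/-- Otherwise `w` lies on a tight pentagon of its own, which shares two vertices with `p` and is
therefore contained in the range of `p`. -/
theorem four_le_hdeg_of_notMem_range (hV : 4 ≤ Fintype.card V) {p : Fin 5 → V}
    (hp : TightPentagon E p) (h3 : hdeg E (p 0) ≤ 3) (hwv : w ≠ v) (hw : w ∉ Set.range p) :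
    4 ≤ hdeg E w := by
  by_contra! hlt
  have hw3 := Nat.le_of_lt_succ hlt
  obtain ⟨p', hp', rfl⟩ := h.exists_tightPentagon_of_hdeg_eq_zero hv hV hwv hw3
  have hgood := h.goodPair_of_hdeg_eq_zero hv (fun h0 => h.notMem_range hp ⟨0, h0⟩) hwv
    fun heq => hw ⟨0, heq⟩
  obtain ⟨x, hx, y, hy, r, hr, s, hs, hxy, -, ⟨hwr, hxr⟩, hws, hys⟩ :=
    hp.exists_mem_mem_of_hdeg_le h3 hgood
  obtain ⟨i, rfl⟩ := hp'.mem_range_of_hdeg_le hw3 hr hwr hxr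
  obtain ⟨j, rfl⟩ := hp'.mem_range_of_hdeg_le hw3 hs hws hys
  refine hw (hp'.range_subset (S := Set.range p) ?_ (fun hij => hxy (congrArg p' hij)) hx hy
    ⟨0, rfl⟩)
  rintro - ⟨k, rfl⟩ - ⟨l, rfl⟩ c hc
  exact h.mem_range_of_tri hv hp hc

theorem card_lt_card_of_tightPentagon (hV : 7 ≤ Fintype.card V) {p : Fin 5 → V}
    (hp : TightPentagon E p) (h3 : hdeg E (p 0) ≤ 3) : Fintype.card V < E.card := by
  obtain ⟨w, hwv, hw⟩ := exists_ne_notMem_range hV v p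
  have hgood := h.goodPair_of_hdeg_eq_zero hv (fun h0 => h.notMem_range hp ⟨0, h0⟩) hwv
    fun heq => hw ⟨0, heq⟩
  obtain ⟨-, ⟨i, rfl⟩, -, ⟨j, rfl⟩, r, hr, s, hs, hij, -, ⟨hwr, hir⟩, hws, hjs⟩ :=
    hp.exists_mem_mem_of_hdeg_le h3 hgood
  obtain ⟨w', hw', rfl⟩ := h.uniform.exists_tri hr hwr hir fun heq => hw ⟨i, heq.symm⟩
  have hw'p : w' ∉ Set.range p := by
    rintro ⟨k, rfl⟩
    exact hw (h.mem_range_of_tri hv hp hw'.rotate)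
  have hw'v : w' ≠ v := by
    rintro rfl
    exact notMem_of_hdeg_eq_zero hv hr (by simp)
  have hout : ∀ k, w ≠ p k ∧ w' ≠ p k ∧ v ≠ p k := fun k =>
    ⟨fun hk => hw ⟨k, hk.symm⟩, fun hk => hw'p ⟨k, hk.symm⟩,
      fun hk => h.notMem_range hp ⟨k, hk.symm⟩⟩
  have hcard : ({w, w', p i, p j} : Finset V).card = 4 := by
    have hne : p i ≠ p j := hij
    simp [Finset.card_insert_of_notMem, hw'.ne₁₃, hout, hne]
  have hsum := three_mul_add_card_le (v := v) (t := {w, w', p i, p j}) h.uniform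
    (by simp [hwv.symm, hw'v.symm, hout]) (fun u huv => h.three_le_hdeg_of_ne (by omega) huv) ?_
  · omega
  · simp only [Finset.forall_mem_insert, Finset.mem_singleton, forall_eq]
    exact ⟨h.four_le_hdeg_of_notMem_range hv (by omega) hp h3 hwv hw,
      h.four_le_hdeg_of_notMem_range hv (by omega) hp h3 hw'v hw'p,
      hp.four_le_hdeg hr hir hwr hw, hp.four_le_hdeg hs hjs hws hw⟩

theorem card_lt_card_of_hdeg_eq_zero (hV : 7 ≤ Fintype.card V) : Fintype.card V < E.card := by
  by_cases hall : ∀ u ≠ v, 4 ≤ hdeg E u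
  · have hsum := three_mul_add_card_le (v := v) (t := Finset.univ.erase v) h.uniform
      (Finset.notMem_erase v Finset.univ) (fun u huv => h.three_le_hdeg_of_ne (by omega) huv)
      fun u hu => hall u (Finset.ne_of_mem_erase hu)
    rw [Finset.card_erase_of_mem (Finset.mem_univ v), Finset.card_univ] at hsum
    omega
  · push Not at hall
    obtain ⟨u, huv, hlt⟩ := hall
    have hu := Nat.le_of_lt_succ hlt
    obtain ⟨p, hp, rfl⟩ := h.exists_tightPentagon_of_hdeg_eq_zero hv (by omega) huv hu
    exact h.card_lt_card_of_tightPentagon hv hV hp hu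

end Isolated

theorem card_lt_card [Fintype V] (hV : 7 ≤ Fintype.card V) :
    Fintype.card V < E.card := by
  obtain hv | hv := (hdeg E v).eq_zero_or_pos
  · exact h.card_lt_card_of_hdeg_eq_zero hv hV
  · obtain ⟨e, he⟩ := Finset.card_pos.1 hv
    obtain ⟨he, hve⟩ := Finset.mem_filter.1 he
    obtain ⟨x, y, hxy, -⟩ := h.uniform.exists_tri_of_mem he hve
    exact h.card_lt_card_of_tri hV hxy

end IsLowVertex

section Map

variable {W : Type*} [DecidableEq W] {E' : Finset (Finset W)}

omit [DecidableEq V] [DecidableEq W] in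
theorem GoodPair.map (φ : V ↪ W) (hE : ∀ e ∈ E, e.map φ ∈ E') (h : GoodPair E x y) :
    GoodPair E' (φ x) (φ y) := by
  obtain ⟨a, b, h₁, h₂, h₃, h₄, h₅, h₆, p, q, r, s, t, hp, hq, hr, hs, ht, hnodup, hinc⟩ := h
  refine ⟨φ a, φ b, φ.injective.ne h₁, φ.injective.ne h₂, φ.injective.ne h₃, φ.injective.ne h₄,
    φ.injective.ne h₅, φ.injective.ne h₆, _, _, _, _, _, hE _ hp, hE _ hq, hE _ hr, hE _ hs,
    hE _ ht, hnodup.map (Finset.map_injective φ), ?_⟩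
  simpa only [Finset.mem_map'] using hinc

omit [DecidableEq V] [DecidableEq W] in
theorem IsBergeK4.map (φ : V ↪ W) (hE : ∀ e ∈ E, e.map φ ∈ E') (h : IsBergeK4 E) :
    IsBergeK4 E' := by
  obtain ⟨a, b, c, d, h₁, h₂, h₃, h₄, h₅, h₆, f₁, f₂, f₃, f₄, f₅, f₆, hf₁, hf₂, hf₃, hf₄, hf₅,
    hf₆, hnodup, hinc⟩ := h
  refine ⟨φ a, φ b, φ c, φ d, φ.injective.ne h₁, φ.injective.ne h₂, φ.injective.ne h₃,
    φ.injective.ne h₄, φ.injective.ne h₅, φ.injective.ne h₆, _, _, _, _, _, _, hE _ hf₁, hE _ hf₂,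
    hE _ hf₃, hE _ hf₄, hE _ hf₅, hE _ hf₆, hnodup.map (Finset.map_injective φ), ?_⟩
  simpa only [Finset.mem_map'] using hinc

theorem IsSaturated.map [Fintype V] [Fintype W] (φ : V ≃ W) (h : IsSaturated E) :
    IsSaturated (E.map (Finset.mapEmbedding φ.toEmbedding).toEmbedding) := by
  obtain ⟨huni, hfree, hsat⟩ := h
  have hmem : ∀ e, e ∈ E.map (Finset.mapEmbedding φ.toEmbedding).toEmbedding ↔
      e.map φ.symm.toEmbedding ∈ E := by
    intro e
    simp only [Finset.mem_map, RelEmbedding.coe_toEmbedding, Finset.mapEmbedding_apply]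
    constructor
    · rintro ⟨f, hf, rfl⟩
      simpa [Finset.map_map] using hf
    · intro he
      exact ⟨_, he, by simp [Finset.map_map]⟩
  refine ⟨fun e he => ?_, fun hK => hfree ?_, fun e he hne => ?_⟩
  · rw [← huni _ ((hmem e).1 he), Finset.card_map]
  · exact hK.map φ.symm.toEmbedding fun e he => (hmem e).1 he
  · refine (hsat (e.map φ.symm.toEmbedding) (by rw [Finset.card_map, he])
      fun h => hne ((hmem e).2 h)).map φ.toEmbedding fun f hf => ?_
    rw [Finset.mem_insert] at hf ⊢
    obtain rfl | hf := hf
    · exact .inl (by simp [Finset.map_map])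
    · exact .inr ((hmem _).2 (by simpa [Finset.map_map] using hf))

end Map

theorem IsBergeK4Core.three_le_hdeg (h : IsBergeK4Core E a b c d) (hx : x ∈ [a, b, c, d]) :
    3 ≤ hdeg E x := by
  obtain ⟨-, -, -, -, -, -, f₁, f₂, f₃, f₄, f₅, f₆, h⟩ := h
  simp only [List.mem_cons, List.not_mem_nil, or_false] at hx
  obtain rfl | rfl | rfl | rfl := hx
  · exact length_le_hdeg (l := [f₁, f₂, f₃]) (by grind) (by grind)
  · exact length_le_hdeg (l := [f₁, f₄, f₅]) (by grind) (by grind)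
  · exact length_le_hdeg (l := [f₂, f₄, f₆]) (by grind) (by grind)
  · exact length_le_hdeg (l := [f₃, f₅, f₆]) (by grind) (by grind)

/-- The core of a Berge-K4 would lie in `S`, so that its six hyperedges meet `S` twice. -/
theorem not_isBergeK4_of_card_le (S : Finset V) (hS : ∀ u ∉ S, hdeg E u ≤ 2)
    (hcard : (E.filter fun e => 1 < (e ∩ S).card).card ≤ 5) : ¬ IsBergeK4 E := by
  rintro ⟨a, b, c, d, hcore⟩
  have hmem : ∀ x ∈ [a, b, c, d], x ∈ S := fun x hx => by
    by_contra hxS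
    exact absurd ((hcore.three_le_hdeg hx).trans (hS x hxS)) (by norm_num)
  simp only [List.forall_mem_cons] at hmem
  obtain ⟨ha, hb, hc, hd, -⟩ := hmem
  obtain ⟨hab, hac, had, hbc, hbd, hcd, f₁, f₂, f₃, f₄, f₅, f₆, h₁, h₂, h₃, h₄, h₅, h₆, hnodup,
    ha₁, hb₁, ha₂, hc₂, ha₃, hd₃, hb₄, hc₄, hb₅, hd₅, hc₆, hd₆⟩ := hcore
  have htwo : ∀ {x y e}, x ∈ S → y ∈ S → x ≠ y → e ∈ E → x ∈ e → y ∈ e →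
      e ∈ E.filter fun e => 1 < (e ∩ S).card := fun hx hy hxy he hxe hye =>
    Finset.mem_filter.2 ⟨he, Finset.one_lt_card.2 ⟨_, Finset.mem_inter.2 ⟨hxe, hx⟩, _,
      Finset.mem_inter.2 ⟨hye, hy⟩, hxy⟩⟩
  have hsub : [f₁, f₂, f₃, f₄, f₅, f₆].toFinset ⊆ E.filter fun e => 1 < (e ∩ S).card := by
    intro e he
    simp only [List.mem_toFinset, List.mem_cons, List.not_mem_nil, or_false] at he
    obtain rfl | rfl | rfl | rfl | rfl | rfl := he
    exacts [htwo ha hb hab h₁ ha₁ hb₁, htwo ha hc hac h₂ ha₂ hc₂, htwo ha hd had h₃ ha₃ hd₃,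
      htwo hb hc hbc h₄ hb₄ hc₄, htwo hb hd hbd h₅ hb₅ hd₅, htwo hc hd hcd h₆ hc₆ hd₆]
  have hsix := (Finset.card_le_card hsub).trans hcard
  rw [List.toFinset_card_of_nodup hnodup] at hsix
  exact absurd hsix (by simp)

section Attach

theorem inl_mem_map_inl {α β : Type*} {s : Finset α} {x : α} :
    (.inl x : α ⊕ β) ∈ s.map .inl ↔ x ∈ s := by
  simp

theorem inr_notMem_map_inl {α β : Type*} {s : Finset α} {y : β} :
    (.inr y : α ⊕ β) ∉ s.map .inl := by
  simp

variable {ι : Type*} [DecidableEq ι]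

/-- The hyperedge on the vertex `c` of `V` and the pair of new vertices with index `i`. -/
def attachEdge (c : V) (i : ι) : Finset (V ⊕ (ι × Bool)) :=
  {.inr (i, false), .inr (i, true), .inl c}

variable {G : Finset (Finset V)} {i j : ι}

theorem inr_mem_attachEdge {k : ι × Bool} : .inr k ∈ attachEdge c j ↔ k.1 = j := by
  obtain ⟨i, _ | _⟩ := k <;> simp [attachEdge]

theorem inl_mem_attachEdge : .inl x ∈ attachEdge c j ↔ x = c := by
  simp [attachEdge]

theorem attachEdge_ne_map_inl : attachEdge c j ≠ e.map .inl := fun h =>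
  inr_notMem_map_inl (h ▸ inr_mem_attachEdge.2 rfl : Sum.inr (j, true) ∈ e.map .inl)

theorem attachEdge_ne_of_index_ne (h : i ≠ j) : attachEdge a i ≠ attachEdge b j := fun he =>
  h (inr_mem_attachEdge.1 (he ▸ inr_mem_attachEdge.2 rfl : Sum.inr (i, true) ∈ attachEdge b j))

theorem attachEdge_ne_of_ne (h : a ≠ b) : attachEdge a i ≠ attachEdge b j := fun he =>
  h (inl_mem_attachEdge.1 (he ▸ inl_mem_attachEdge.2 rfl : Sum.inl a ∈ attachEdge b j))

theorem eq_attachEdge {e : Finset (V ⊕ (ι × Bool))} (he : e.card = 3)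
    (hinl : ∀ x, .inl x ∈ e → x = c) (hinr : ∀ k, .inr k ∈ e → k.1 = j) :
    e = attachEdge c j := by
  refine Finset.eq_of_subset_of_card_le ?_ (he ▸ Finset.card_le_three)
  rintro (x | k) hx
  exacts [inl_mem_attachEdge.2 (hinl x hx), inr_mem_attachEdge.2 (hinr k hx)]

variable [Fintype ι]

variable (ι) in
/-- The hypergraph `G` with `2 * card ι` new vertices, coming in pairs, and one new hyperedge on
each pair and each of `a`, `b`. It turns saturated hypergraphs into larger ones. -/
def attach (G : Finset (Finset V)) (a b : V) : Finset (Finset (V ⊕ (ι × Bool))) :=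
  G.map (Finset.mapEmbedding .inl).toEmbedding ∪
    (Finset.univ.image (attachEdge a) ∪ Finset.univ.image (attachEdge b))

theorem mem_attach {e : Finset (V ⊕ (ι × Bool))} : e ∈ attach ι G a b ↔
    (∃ g ∈ G, g.map .inl = e) ∨ (∃ i, attachEdge a i = e) ∨ ∃ i, attachEdge b i = e := by
  simp [attach]

theorem map_inl_mem_attach (he : e ∈ G) : e.map .inl ∈ attach ι G a b :=
  mem_attach.2 (.inl ⟨e, he, rfl⟩)

theorem attachEdge_left_mem_attach (i : ι) : attachEdge a i ∈ attach ι G a b :=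
  mem_attach.2 (.inr (.inl ⟨i, rfl⟩))

theorem attachEdge_right_mem_attach (i : ι) : attachEdge b i ∈ attach ι G a b :=
  mem_attach.2 (.inr (.inr ⟨i, rfl⟩))

theorem card_attach_le : (attach ι G a b).card ≤ G.card + 2 * Fintype.card ι := by
  have h := Finset.card_union_le (Finset.univ.image (attachEdge (ι := ι) a))
    (Finset.univ.image (attachEdge b))
  have ha : (Finset.univ.image (attachEdge (ι := ι) a)).card ≤ Fintype.card ι :=
    Finset.card_image_le
  have hb : (Finset.univ.image (attachEdge (ι := ι) b)).card ≤ Fintype.card ι :=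
    Finset.card_image_le
  refine (Finset.card_union_le _ _).trans ?_
  rw [Finset.card_map]
  omega

theorem Is3Uniform.attach (hG : Is3Uniform G) : Is3Uniform (attach ι G a b) := by
  intro e he
  obtain ⟨g, hg, rfl⟩ | ⟨i, rfl⟩ | ⟨i, rfl⟩ := mem_attach.1 he
  · rw [Finset.card_map, hG g hg]
  all_goals exact Finset.card_eq_three.2 ⟨_, _, _, by simp, by simp, by simp, rfl⟩

theorem card_filter_attach_le (P : Finset (V ⊕ (ι × Bool)) → Prop) [DecidablePred P]
    (ha : ∀ i, ¬ P (attachEdge a i)) (hb : ∀ i, ¬ P (attachEdge b i)) :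
    ((attach ι G a b).filter P).card ≤ (G.filter fun g => P (g.map .inl)).card := by
  rw [← Finset.card_map (Finset.mapEmbedding (.inl : V ↪ V ⊕ (ι × Bool))).toEmbedding]
  refine Finset.card_le_card fun e he => ?_
  obtain ⟨he, hP⟩ := Finset.mem_filter.1 he
  obtain ⟨g, hg, rfl⟩ | ⟨i, rfl⟩ | ⟨i, rfl⟩ := mem_attach.1 he
  · exact Finset.mem_map.2 ⟨g, Finset.mem_filter.2 ⟨hg, hP⟩, rfl⟩
  · exact absurd hP (ha i)
  · exact absurd hP (hb i)

theorem hdeg_attach_inl_le (ha : x ≠ a) (hb : x ≠ b) :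
    hdeg (attach ι G a b) (.inl x) ≤ hdeg G x := by
  simpa only [hdeg, inl_mem_map_inl] using card_filter_attach_le (G := G) (ι := ι) (.inl x ∈ ·)
    (fun _ h => ha (inl_mem_attachEdge.1 h)) fun _ h => hb (inl_mem_attachEdge.1 h)

theorem hdeg_attach_inr_le_two {k : ι × Bool} : hdeg (attach ι G a b) (.inr k) ≤ 2 := by
  refine (Finset.card_le_card fun e he => ?_).trans
    (Finset.card_le_two (a := attachEdge a k.1) (b := attachEdge b k.1))
  obtain ⟨he, hk⟩ := Finset.mem_filter.1 he
  rw [Finset.mem_insert, Finset.mem_singleton]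
  obtain ⟨g, -, rfl⟩ | ⟨i, rfl⟩ | ⟨i, rfl⟩ := mem_attach.1 he
  · exact absurd hk inr_notMem_map_inl
  · exact .inl (by rw [inr_mem_attachEdge.1 hk])
  · exact .inr (by rw [inr_mem_attachEdge.1 hk])

theorem card_filter_attach_inter_le (S : Finset V) :
    ((attach ι G a b).filter fun e => 1 < (e ∩ S.map .inl).card).card ≤
      (G.filter fun g => 1 < (g ∩ S).card).card := by
  have hone : ∀ (c : V) (i : ι), ¬ 1 < (attachEdge c i ∩ S.map .inl).card := by
    intro c i
    have hsub : attachEdge c i ∩ S.map .inl ⊆ {.inl c} := by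
      rintro (x | k) hx <;> rw [Finset.mem_inter] at hx
      · rw [inl_mem_attachEdge.1 hx.1, Finset.mem_singleton]
      · exact absurd hx.2 inr_notMem_map_inl
    exact (Finset.card_le_card hsub).not_gt
  simpa only [← Finset.map_inter, Finset.card_map] using
    card_filter_attach_le (G := G) (ι := ι) (fun e => 1 < (e ∩ S.map .inl).card) (hone a) (hone b)

/-- A saturated hypergraph `G` which stays saturated when pairs of new vertices are attached to `a`
and `b`. The set `S` contains the core of every possible Berge-K4. -/
structure IsGadget (G : Finset (Finset V)) (a b : V) (S : Finset V) : Prop where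
  uniform : Is3Uniform G
  left_mem : a ∈ S
  right_mem : b ∈ S
  hdeg_le_two : ∀ u ∉ S, hdeg G u ≤ 2
  card_filter_le : (G.filter fun e => 1 < (e ∩ S).card).card ≤ 5
  goodPair : GoodPair G a b
  exists_triangle : ∀ u, u ≠ a → u ≠ b → ∃ p ∈ G, ∃ q ∈ G, ∃ r ∈ G, [p, q, r].Nodup ∧
    (u ∈ p ∧ a ∈ p) ∧ (u ∈ q ∧ b ∈ q) ∧ a ∈ r ∧ b ∈ r
  exists_goodPair : ∀ e, e.card = 3 → e ∉ G → ∃ x ∈ e, ∃ y ∈ e, GoodPair G x y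

namespace IsGadget

variable {S : Finset V} (hG : IsGadget G a b S)
include hG

omit [Fintype ι] [DecidableEq ι] in
theorem exists_mem_mem : ∃ r ∈ G, a ∈ r ∧ b ∈ r := by
  obtain ⟨x, y, p, q, r, s, t, hD⟩ := hG.goodPair.exists_bergeDiamond
  obtain ⟨-, -, -, -, r, hr, -, -, -, hab⟩ :=
    hG.exists_triangle x (by have := hD.ne; grind) (by have := hD.ne; grind)
  exact ⟨r, hr, hab⟩

theorem goodPair_inr_inr {k l : ι × Bool} (hkl : k.1 ≠ l.1) :
    GoodPair (attach ι G a b) (.inr k) (.inr l) := by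
  obtain ⟨r, hr, har, hbr⟩ := hG.exists_mem_mem
  have hab := hG.goodPair.ne
  have hne : k ≠ l := fun h => hkl (congrArg Prod.fst h)
  have hD : BergeDiamond (attach ι G a b) (.inr k) (.inr l) (.inl a) (.inl b) (attachEdge a k.1)
      (attachEdge b k.1) (attachEdge a l.1) (attachEdge b l.1) (r.map .inl) := by
    refine ⟨by simp [hab, hne], ⟨attachEdge_left_mem_attach _, attachEdge_right_mem_attach _,
      attachEdge_left_mem_attach _, attachEdge_right_mem_attach _, map_inl_mem_attach hr⟩, ?_, ?_⟩
    · simp [attachEdge_ne_of_ne hab, attachEdge_ne_of_index_ne hkl, attachEdge_ne_map_inl]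
    · simp only [inr_mem_attachEdge, inl_mem_attachEdge, inl_mem_map_inl]
      tauto
  exact hD.goodPair

theorem goodPair_inr_inl (k : ι × Bool) (hxa : x ≠ a) (hxb : x ≠ b) :
    GoodPair (attach ι G a b) (.inr k) (.inl x) := by
  obtain ⟨p, hp, q, hq, r, hr, hnodup, hinc⟩ := hG.exists_triangle x hxa hxb
  have hab := hG.goodPair.ne
  have hD : BergeDiamond (attach ι G a b) (.inr k) (.inl x) (.inl a) (.inl b)
      (attachEdge a k.1) (attachEdge b k.1) (p.map .inl) (q.map .inl) (r.map .inl) := by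
    refine ⟨by simp [hab, hxa, hxb], ⟨attachEdge_left_mem_attach _, attachEdge_right_mem_attach _,
      map_inl_mem_attach hp, map_inl_mem_attach hq, map_inl_mem_attach hr⟩, ?_, ?_⟩
    · simpa [attachEdge_ne_of_ne hab, attachEdge_ne_map_inl] using hnodup
    · simp only [inr_mem_attachEdge, inl_mem_attachEdge, inl_mem_map_inl]
      tauto
  exact hD.goodPair

theorem exists_goodPair_map_inl (he : e.card = 3) (hne : e ∉ G) :
    ∃ x ∈ e.map .inl, ∃ y ∈ e.map .inl, GoodPair (attach ι G a b) x y := by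
  obtain ⟨x, hx, y, hy, hxy⟩ := hG.exists_goodPair e he hne
  exact ⟨.inl x, inl_mem_map_inl.2 hx, .inl y, inl_mem_map_inl.2 hy,
    hxy.map .inl fun _ => map_inl_mem_attach⟩

theorem exists_goodPair_attach {e : Finset (V ⊕ (ι × Bool))} (he : e.card = 3)
    (hne : e ∉ attach ι G a b) : ∃ x ∈ e, ∃ y ∈ e, GoodPair (attach ι G a b) x y := by
  by_cases hold : ∀ k, .inr k ∉ e
  · obtain ⟨f, rfl⟩ : ∃ f : Finset V, f.map .inl = e := by
      refine ⟨e.toLeft, ?_⟩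
      ext (x | k)
      · simp
      · simpa using hold k
    rw [Finset.card_map] at he
    exact hG.exists_goodPair_map_inl he fun hg => hne (map_inl_mem_attach hg)
  push Not at hold
  obtain ⟨k, hk⟩ := hold
  by_contra! hgood
  have hinr : ∀ l, .inr l ∈ e → l.1 = k.1 := fun l hl => by
    by_contra hlk
    exact hgood _ hl _ hk (hG.goodPair_inr_inr hlk)
  have hinl : ∀ x, .inl x ∈ e → x = a ∨ x = b := fun x hx => by
    by_contra! hxab
    exact hgood _ hk _ hx (hG.goodPair_inr_inl _ hxab.1 hxab.2)
  have hab : .inl a ∈ e → .inl b ∉ e := fun ha hb =>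
    hgood _ ha _ hb (hG.goodPair.map .inl fun _ => map_inl_mem_attach)
  by_cases ha : .inl a ∈ e
  · have heq : e = attachEdge a k.1 := eq_attachEdge he
      (fun x hx => (hinl x hx).resolve_right fun hxb => hab ha (hxb ▸ hx)) hinr
    exact hne (heq ▸ attachEdge_left_mem_attach _)
  · have heq : e = attachEdge b k.1 := eq_attachEdge he
      (fun x hx => (hinl x hx).resolve_left fun hxa => ha (hxa ▸ hx)) hinr
    exact hne (heq ▸ attachEdge_right_mem_attach _)

theorem isSaturated_attach [Fintype V] : IsSaturated (attach ι G a b) := by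
  refine ⟨hG.uniform.attach, not_isBergeK4_of_card_le (S.map .inl) ?_
    ((card_filter_attach_inter_le S).trans hG.card_filter_le), fun e he hne => ?_⟩
  · rintro (x | k) hx
    · rw [inl_mem_map_inl] at hx
      exact (hdeg_attach_inl_le (ne_of_mem_of_not_mem hG.left_mem hx).symm
        (ne_of_mem_of_not_mem hG.right_mem hx).symm).trans (hG.hdeg_le_two x hx)
    · exact hdeg_attach_inr_le_two
  · obtain ⟨x, hx, y, hy, hxy⟩ := hG.exists_goodPair_attach he hne
    exact hxy.isBergeK4_insert hne hx hy

omit [Fintype ι] [DecidableEq ι] in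
theorem exists_isSaturated {W : Type*} [DecidableEq W] [Fintype W] [Fintype V] {m : ℕ}
    (hcard : G.card ≤ Fintype.card V) (hW : Fintype.card W = Fintype.card V + 2 * m) :
    ∃ E : Finset (Finset W), IsSaturated E ∧ E.card ≤ Fintype.card W := by
  have φ : V ⊕ (Fin m × Bool) ≃ W := by
    refine Fintype.equivOfCardEq ?_
    rw [hW, Fintype.card_sum, Fintype.card_prod, Fintype.card_fin, Fintype.card_bool, mul_comm]
  refine ⟨_, hG.isSaturated_attach.map φ, ?_⟩
  rw [Finset.card_map, hW]
  refine card_attach_le.trans ?_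
  rw [Fintype.card_fin]
  omega

end IsGadget

end Attach

/-- The gadget producing the saturated hypergraphs on an odd number of vertices. -/
def gadgetFive : Finset (Finset (Fin 5)) := {{0, 1, 2}, {0, 1, 3}, {0, 2, 4}, {1, 3, 4}, {2, 3, 4}}

/-- The gadget producing the saturated hypergraphs on an even number of vertices. -/
def gadgetSix : Finset (Finset (Fin 6)) :=
  {{0, 1, 2}, {0, 1, 3}, {0, 2, 3}, {0, 2, 4}, {0, 3, 5}, {1, 4, 5}}

theorem bergeDiamond_gadgetFive :
    BergeDiamond gadgetFive 0 1 2 3 {0, 2, 4} {0, 1, 3} {0, 1, 2} {1, 3, 4} {2, 3, 4} := by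
  constructor <;> decide

theorem exists_goodPair_gadgetFive (e : Finset (Fin 5)) (he : e.card = 3) (hne : e ∉ gadgetFive) :
    ∃ x ∈ e, ∃ y ∈ e, GoodPair gadgetFive x y := by
  have hpair : ∀ e : Finset (Fin 5), e.card = 3 → e ∉ gadgetFive →
      (0 ∈ e ∧ 1 ∈ e) ∨ (0 ∈ e ∧ 3 ∈ e) ∨ (1 ∈ e ∧ 2 ∈ e) := by decide
  have h03 : BergeDiamond gadgetFive 0 3 1 2 {0, 1, 3} {0, 2, 4} {1, 3, 4} {2, 3, 4} {0, 1, 2} := by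
    constructor <;> decide
  have h12 : BergeDiamond gadgetFive 1 2 0 3 {0, 1, 2} {1, 3, 4} {0, 2, 4} {2, 3, 4} {0, 1, 3} := by
    constructor <;> decide
  obtain h | h | h := hpair e he hne
  exacts [⟨0, h.1, 1, h.2, bergeDiamond_gadgetFive.goodPair⟩, ⟨0, h.1, 3, h.2, h03.goodPair⟩,
    ⟨1, h.1, 2, h.2, h12.goodPair⟩]

theorem isGadget_gadgetFive : IsGadget gadgetFive 0 1 Finset.univ where
  uniform := by unfold Is3Uniform; decide
  left_mem := Finset.mem_univ 0
  right_mem := Finset.mem_univ 1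
  hdeg_le_two u hu := absurd (Finset.mem_univ u) hu
  card_filter_le := by decide
  goodPair := bergeDiamond_gadgetFive.goodPair
  exists_triangle := by decide
  exists_goodPair := exists_goodPair_gadgetFive

theorem bergeDiamond_gadgetSix :
    BergeDiamond gadgetSix 0 1 2 3 {0, 2, 4} {0, 3, 5} {0, 1, 2} {0, 1, 3} {0, 2, 3} := by
  constructor <;> decide

theorem exists_goodPair_gadgetSix (e : Finset (Fin 6)) (he : e.card = 3) (hne : e ∉ gadgetSix) :
    ∃ x ∈ e, ∃ y ∈ e, GoodPair gadgetSix x y := by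
  have hpair : ∀ e : Finset (Fin 6), e.card = 3 → e ∉ gadgetSix →
      (0 ∈ e ∧ 1 ∈ e) ∨ (0 ∈ e ∧ 4 ∈ e) ∨ (1 ∈ e ∧ 2 ∈ e) ∨ (1 ∈ e ∧ 3 ∈ e) ∨ (2 ∈ e ∧ 5 ∈ e) ∨
        (3 ∈ e ∧ 4 ∈ e) := by decide
  have h04 : BergeDiamond gadgetSix 0 4 1 2 {0, 1, 3} {0, 2, 3} {1, 4, 5} {0, 2, 4} {0, 1, 2} := by
    constructor <;> decide
  have h12 : BergeDiamond gadgetSix 1 2 0 3 {0, 1, 2} {0, 1, 3} {0, 2, 4} {0, 2, 3} {0, 3, 5} := by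
    constructor <;> decide
  have h13 : BergeDiamond gadgetSix 1 3 0 2 {0, 1, 3} {0, 1, 2} {0, 3, 5} {0, 2, 3} {0, 2, 4} := by
    constructor <;> decide
  have h25 : BergeDiamond gadgetSix 2 5 0 1 {0, 2, 3} {0, 1, 2} {0, 3, 5} {1, 4, 5} {0, 1, 3} := by
    constructor <;> decide
  have h34 : BergeDiamond gadgetSix 3 4 0 1 {0, 2, 3} {0, 1, 3} {0, 2, 4} {1, 4, 5} {0, 1, 2} := by
    constructor <;> decide
  obtain h | h | h | h | h | h := hpair e he hne
  exacts [⟨0, h.1, 1, h.2, bergeDiamond_gadgetSix.goodPair⟩, ⟨0, h.1, 4, h.2, h04.goodPair⟩,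
    ⟨1, h.1, 2, h.2, h12.goodPair⟩, ⟨1, h.1, 3, h.2, h13.goodPair⟩, ⟨2, h.1, 5, h.2, h25.goodPair⟩,
    ⟨3, h.1, 4, h.2, h34.goodPair⟩]

theorem isGadget_gadgetSix : IsGadget gadgetSix 0 1 {0, 1, 2, 3} where
  uniform := by unfold Is3Uniform; decide
  left_mem := by decide
  right_mem := by decide
  hdeg_le_two := by decide
  card_filter_le := by decide
  goodPair := bergeDiamond_gadgetSix.goodPair
  exists_triangle := by decide
  exists_goodPair := exists_goodPair_gadgetSix

theorem exists_isSaturated_card_le [Fintype V] (hV : 5 ≤ Fintype.card V) :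
    ∃ E : Finset (Finset V), IsSaturated E ∧ E.card ≤ Fintype.card V := by
  obtain ⟨m, hm | hm⟩ := Nat.even_or_odd' (Fintype.card V)
  · exact isGadget_gadgetSix.exists_isSaturated (m := m - 3) (by decide)
      (by rw [Fintype.card_fin]; omega)
  · exact isGadget_gadgetFive.exists_isSaturated (m := m - 2) (by decide)
      (by rw [Fintype.card_fin]; omega)

theorem stmt_12_general [Fintype V] (hV : 7 ≤ Fintype.card V) (hsat : IsSaturated E)
    (hcard : E.card ≤ Fintype.card V) (v : V) : 2 ≤ hdeg E v := by
  by_contra! hv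
  exact ((hsat.isLowVertex (Nat.le_of_lt_succ hv)).card_lt_card hV).not_ge hcard

theorem stmt_12 (n : ℕ) (hn : 7 ≤ n) (E : Finset (Finset (Fin n)))
    (hsat : IsSaturated E)
    (hmin : ∀ E' : Finset (Finset (Fin n)), IsSaturated E' → E.card ≤ E'.card) :
    ∀ v : Fin n, 2 ≤ hdeg E v := by
  have hV : 7 ≤ Fintype.card (Fin n) := by rwa [Fintype.card_fin]
  obtain ⟨E', hE', hcard⟩ := exists_isSaturated_card_le (V := Fin n) (by omega)
  exact stmt_12_general hV hsat ((hmin E' hE').trans hcard)
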